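/- Let n ≥ 3 and let f ∈ Aut(F_n) be the automorphism with f(x_i) = x_i^{-1} for all 1 ≤ i ≤ n. Then IA_n ⊆ N(f) and N(f) = ρ⁻¹({I, −I}); equivalently, there is a short exact sequence 1 → IA_n → N(f) → {±I} → 1. -/

import Mathlib

open Matrix

namespace NormalClosurePaper

/-- The automorphism group of the free group on `n` generators. -/
abbrev FrAut (n : ℕ) := MulAut (FreeGroup (Fin n))

/-- Exponent sum of the generator `x_i` in a word of the free group. -/
def expSum {n : ℕ} (i : Fin n) : FreeGroup (Fin n) →* Multiplicative ℤ :=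
  FreeGroup.lift fun j => Multiplicative.ofAdd (if j = i then (1 : ℤ) else 0)

/-- The abelianized matrix of an automorphism of the free group:
the `(i, j)` entry is the exponent sum of `x_i` in `f x_j`. -/
def mat {n : ℕ} (f : FrAut n) : Matrix (Fin n) (Fin n) ℤ :=
  Matrix.of fun i j => (expSum i (f (FreeGroup.of j))).toAdd

lemma expSum_apply {n : ℕ} (f : FrAut n) (i : Fin n) (w : FreeGroup (Fin n)) :
    (expSum i (f w)).toAdd = ∑ k, mat f i k * (expSum k w).toAdd := by
  induction w using FreeGroup.induction_on with
  | C1 => simp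
  | of j =>
      have h : (expSum i (f (FreeGroup.of j))).toAdd = mat f i j := rfl
      rw [h]
      simp [expSum, mul_ite, Finset.sum_ite_eq]
  | inv_of j ih =>
      simp only [_root_.map_inv, toAdd_inv, mul_neg, Finset.sum_neg_distrib, ih]
  | mul x y ihx ihy =>
      simp only [_root_.map_mul, toAdd_mul, mul_add, Finset.sum_add_distrib, ihx, ihy]

lemma mat_one {n : ℕ} : mat (1 : FrAut n) = 1 := by
  ext i j
  simp [mat, expSum, Matrix.one_apply, eq_comm]

lemma mat_mul {n : ℕ} (f g : FrAut n) : mat (f * g) = mat f * mat g := by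
  ext i j
  rw [Matrix.mul_apply]
  show (expSum i ((f * g) (FreeGroup.of j))).toAdd = _
  rw [show (f * g) (FreeGroup.of j) = f (g (FreeGroup.of j)) from rfl, expSum_apply]
  rfl

/-- The matrix of the induced map on the abelianization, as a monoid homomorphism. -/
def matHom (n : ℕ) : FrAut n →* Matrix (Fin n) (Fin n) ℤ where
  toFun := mat
  map_one' := mat_one
  map_mul' := mat_mul

/-- The homomorphism `Aut(F_n) → GL_n(ℤ)` induced by abelianization. -/
def ρ (n : ℕ) : FrAut n →* GL (Fin n) ℤ := (matHom n).toHomUnits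

/-- The composition of `ρ` with the determinant. -/
def detρ (n : ℕ) : FrAut n →* ℤˣ := (Matrix.GeneralLinearGroup.det).comp (ρ n)

/-- The special automorphism group `SAut(F_n)`: automorphisms whose induced matrix
has determinant `1`. -/
def SAut (n : ℕ) : Subgroup (FrAut n) := (detρ n).ker

/-- The Torelli subgroup `IA_n`, the kernel of `ρ`. -/
def IA (n : ℕ) : Subgroup (FrAut n) := (ρ n).ker

/-- The group of inner automorphisms of the free group. -/
def Inn (n : ℕ) : Subgroup (FrAut n) := (MulAut.conj (G := FreeGroup (Fin n))).range

instance Inn_normal (n : ℕ) : (Inn n).Normal := by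
  constructor
  rintro - ⟨a, rfl⟩ g
  refine ⟨g a, ?_⟩
  ext y
  simp [MulAut.conj_apply, MulAut.mul_apply, _root_.map_mul, _root_.map_inv]

/-- The outer automorphism group `Out(F_n)`. -/
abbrev OutF (n : ℕ) := FrAut n ⧸ Inn n

/-- The projection `Aut(F_n) → Out(F_n)`. -/
def toOut (n : ℕ) : FrAut n →* OutF n := QuotientGroup.mk' (Inn n)

lemma mat_conj {n : ℕ} (g : FreeGroup (Fin n)) : mat (MulAut.conj g) = 1 := by
  rw [← mat_one (n := n)]
  ext i j
  simp only [mat, Matrix.of_apply, MulAut.conj_apply, MulAut.one_apply, _root_.map_mul,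
    _root_.map_inv, toAdd_mul, toAdd_inv]
  omega

lemma ρ_conj {n : ℕ} (g : FreeGroup (Fin n)) : ρ n (MulAut.conj g) = 1 :=
  Units.ext (mat_conj g)

/-- The homomorphism `Out(F_n) → GL_n(ℤ)` induced by abelianization. -/
def ρOut (n : ℕ) : OutF n →* GL (Fin n) ℤ :=
  QuotientGroup.lift (Inn n) (ρ n) (by rintro - ⟨g, rfl⟩; exact ρ_conj g)

/-- The composition of `ρOut` with the determinant. -/
def detρOut (n : ℕ) : OutF n →* ℤˣ := (Matrix.GeneralLinearGroup.det).comp (ρOut n)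

/-- The special outer automorphism group `SOut(F_n)`. -/
def SOut (n : ℕ) : Subgroup (OutF n) := (detρOut n).ker

/-- Entrywise reduction `GL_n(ℤ) → GL_n(ℤ/ℓℤ)`. -/
def redGL (n ℓ : ℕ) : GL (Fin n) ℤ →* GL (Fin n) (ZMod ℓ) :=
  Units.map (RingHom.mapMatrix (Int.castRingHom (ZMod ℓ))).toMonoidHom

/-- The subgroup `GΓ_n(ℓ)` of `GL_n(ℤ)` of matrices congruent to the identity mod `ℓ`. -/
def GGamma (n ℓ : ℕ) : Subgroup (GL (Fin n) ℤ) := (redGL n ℓ).ker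

/-- The level `ℓ` congruence subgroup `Γ_n(ℓ)` (viewed inside `GL_n(ℤ)`): matrices with
determinant `1` that are congruent to the identity mod `ℓ`. -/
def GammaGL (n ℓ : ℕ) : Subgroup (GL (Fin n) ℤ) :=
  GGamma n ℓ ⊓ (Matrix.GeneralLinearGroup.det).ker

/-- Reduction `SL_n(ℤ) → SL_n(ℤ/ℓℤ)`. -/
def redSL (n ℓ : ℕ) : Matrix.SpecialLinearGroup (Fin n) ℤ →*
    Matrix.SpecialLinearGroup (Fin n) (ZMod ℓ) :=
  Matrix.SpecialLinearGroup.map (Int.castRingHom (ZMod ℓ))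

/-- Projection `SL_n(ℤ/ℓℤ) → PSL_n(ℤ/ℓℤ)`. -/
def projPSL (n ℓ : ℕ) : Matrix.SpecialLinearGroup (Fin n) (ZMod ℓ) →*
    Matrix.ProjectiveSpecialLinearGroup (Fin n) (ZMod ℓ) :=
  QuotientGroup.mk' _


/-- A group with elements behaving like the elementary matrices and the signed permutation
matrices of `GL(ι, ℤ)`, together with a homomorphism to integral matrices. -/
structure SteinbergSystem (ι Q : Type*) [Fintype ι] [DecidableEq ι] [Group Q] where
  /-- The matrix of an element. -/
  M : Q →* Matrix ι ι ℤ
  /-- The elementary elements. -/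
  t : ι → ι → ℤˣ → Q
  /-- The signed permutations. -/
  sp : Equiv.Perm ι → (ι → ℤˣ) → Q
  t_neg : ∀ {i j}, i ≠ j → ∀ e, t i j (-e) = (t i j e)⁻¹
  t_comm : ∀ {i j k l}, i ≠ j → k ≠ l → j ≠ k → i ≠ l → ∀ e d,
    t i j e * t k l d = t k l d * t i j e
  t_triangle : ∀ {i j k}, i ≠ j → j ≠ k → i ≠ k → ∀ e d,
    t i j e * t j k d = t i k (e * d) * t j k d * t i j e
  sp_mul : ∀ σ ε σ' ε', sp σ ε * sp σ' ε' = sp (σ * σ') fun i => ε' i * ε (σ' i)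
  sp_t : ∀ {i j}, i ≠ j → ∀ σ ε e,
    sp σ ε * t i j e = t (σ i) (σ j) (ε i * ε j * e) * sp σ ε
  weyl : ∀ {i j}, i ≠ j → ∀ e, ∃ ε : ι → ℤˣ, (∀ k, k ≠ i → k ≠ j → ε k = 1) ∧
    t i j e * t j i (-e) * t i j e = sp (Equiv.swap i j) ε
  M_t : ∀ {i j}, i ≠ j → ∀ e : ℤˣ, M (t i j e) = Matrix.transvection i j (e : ℤ)
  M_sp : ∀ σ ε, M (sp σ ε) = Matrix.of fun k l => if k = σ l then (ε l : ℤ) else 0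

namespace SteinbergSystem

variable {ι Q : Type*} [Fintype ι] [DecidableEq ι] [Group Q] (D : SteinbergSystem ι Q)

lemma sp_one : D.sp 1 1 = 1 := by
  have h := D.sp_mul 1 1 1 1
  simp only [mul_one, Pi.one_apply] at h
  exact mul_eq_left.1 h

lemma sp_inv (σ : Equiv.Perm ι) (ε : ι → ℤˣ) :
    (D.sp σ ε)⁻¹ = D.sp σ⁻¹ fun i => ε (σ⁻¹ i) := by
  rw [inv_eq_iff_mul_eq_one, D.sp_mul, ← D.sp_one]
  congr 1
  · simp
  · funext i
    simp

lemma M_t_mul_apply {i j : ι} (hij : i ≠ j) (e : ℤˣ) (q : Q) (k l : ι) :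
    D.M (D.t i j e * q) k l = D.M q k l + if k = i then (e : ℤ) * D.M q j l else 0 := by
  rw [map_mul, D.M_t hij]
  split_ifs with h
  · subst h
    simp
  · simp [Matrix.transvection_mul_apply_of_ne _ _ _ _ h]

lemma M_sp_mul_apply (σ : Equiv.Perm ι) (ε : ι → ℤˣ) (q : Q) (k l : ι) :
    D.M (D.sp σ ε * q) (σ k) l = ε k * D.M q k l := by
  rw [map_mul, D.M_sp, Matrix.mul_apply]
  simp

/-- Signed permutations that only move the elements of `S`. -/
def spSet (S : Finset ι) : Set Q :=
  {q | ∃ (σ : Equiv.Perm ι) (ε : ι → ℤˣ), (∀ k ∉ S, σ k = k ∧ ε k = 1) ∧ q = D.sp σ ε}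

/-- Elementary elements with both indices in `S`. -/
def tSet (S : Finset ι) : Set Q :=
  {q | ∃ i ∈ S, ∃ j ∈ S, i ≠ j ∧ ∃ e, q = D.t i j e}

/-- The subgroup generated by the elementary elements and signed permutations supported on `S`. -/
def block (S : Finset ι) : Subgroup Q := Subgroup.closure (D.tSet S ∪ D.spSet S)

variable {D}

lemma t_mem_block {S : Finset ι} {i j : ι} (hi : i ∈ S) (hj : j ∈ S) (hij : i ≠ j) (e : ℤˣ) :
    D.t i j e ∈ D.block S :=
  Subgroup.subset_closure (Or.inl ⟨i, hi, j, hj, hij, e, rfl⟩)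

lemma sp_mem_block {S : Finset ι} {σ : Equiv.Perm ι} {ε : ι → ℤˣ}
    (h : ∀ k ∉ S, σ k = k ∧ ε k = 1) : D.sp σ ε ∈ D.block S :=
  Subgroup.subset_closure (Or.inr ⟨σ, ε, h, rfl⟩)

omit [Fintype ι] [DecidableEq ι] in
lemma fixes_mul {S : Finset ι} {σ σ' : Equiv.Perm ι} {ε ε' : ι → ℤˣ}
    (h : ∀ k ∉ S, σ k = k ∧ ε k = 1) (h' : ∀ k ∉ S, σ' k = k ∧ ε' k = 1) :
    ∀ k ∉ S, (σ * σ') k = k ∧ ε' k * ε (σ' k) = 1 := fun k hk => by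
  simp [h k hk, h' k hk]

omit [Fintype ι] [DecidableEq ι] in
lemma fixes_inv {S : Finset ι} {σ : Equiv.Perm ι} {ε : ι → ℤˣ}
    (h : ∀ k ∉ S, σ k = k ∧ ε k = 1) : ∀ k ∉ S, σ⁻¹ k = k ∧ ε (σ⁻¹ k) = 1 := fun k hk => by
  have : σ⁻¹ k = k := by rw [Equiv.Perm.inv_eq_iff_eq, (h k hk).1]
  simp [this, h k hk]

omit [Fintype ι] [DecidableEq ι] in
lemma perm_mem {S : Finset ι} {σ : Equiv.Perm ι} {ε : ι → ℤˣ}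
    (h : ∀ k ∉ S, σ k = k ∧ ε k = 1) {i : ι} (hi : i ∈ S) : σ i ∈ S := by
  by_contra hs
  exact hs ((σ.injective (h _ hs).1).symm ▸ hi)

/-- Induction for `block S` by left multiplication with generators. -/
lemma block_induction {S : Finset ι} {p : Q → Prop} (one : p 1)
    (ht : ∀ i ∈ S, ∀ j ∈ S, i ≠ j → ∀ e q, p q → p (D.t i j e * q))
    (hsp : ∀ σ ε, (∀ k ∉ S, σ k = k ∧ ε k = 1) → ∀ q, p q → p (D.sp σ ε * q))
    {q : Q} (hq : q ∈ D.block S) : p q := by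
  induction hq using Subgroup.closure_induction_left with
  | one => exact one
  | mul_left x hx y _ ih =>
    rcases hx with ⟨i, hi, j, hj, hij, e, rfl⟩ | ⟨σ, ε, h, rfl⟩
    · exact ht i hi j hj hij e y ih
    · exact hsp σ ε h y ih
  | inv_mul_cancel x hx y _ ih =>
    rcases hx with ⟨i, hi, j, hj, hij, e, rfl⟩ | ⟨σ, ε, h, rfl⟩
    · rw [← D.t_neg hij]
      exact ht i hi j hj hij (-e) y ih
    · rw [sp_inv]
      exact hsp _ _ (fixes_inv h) y ih

/-- Rows outside `S` are unchanged by `block S`. -/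
lemma M_row_of_mem_block {S : Finset ι} {s : ι} (hs : s ∉ S) {q : Q} (hq : q ∈ D.block S)
    (l : ι) : D.M q s l = (1 : Matrix ι ι ℤ) s l := by
  refine block_induction (p := fun q => D.M q s l = (1 : Matrix ι ι ℤ) s l) ?_ ?_ ?_ hq
  · simp
  · intro i hi j hj hij e q ih
    rw [M_t_mul_apply _ hij, ih, if_neg, add_zero]
    rintro rfl
    exact hs hi
  · intro σ ε h q ih
    have := D.M_sp_mul_apply σ ε q s l
    rwa [(h s hs).1, (h s hs).2, Units.val_one, one_mul, ih] at this

variable (D) in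
/-- The subgroup generated by `block S` and the elementary elements in row `s`. -/
def stab (S : Finset ι) (s : ι) : Subgroup Q :=
  Subgroup.closure ((D.block S : Set Q) ∪ {q | ∃ j, s ≠ j ∧ ∃ e, q = D.t s j e})

lemma block_le_stab (S : Finset ι) (s : ι) : D.block S ≤ D.stab S s := fun _ h =>
  Subgroup.subset_closure (Or.inl h)

lemma t_mem_stab (S : Finset ι) {s j : ι} (h : s ≠ j) (e : ℤˣ) : D.t s j e ∈ D.stab S s :=
  Subgroup.subset_closure (Or.inr ⟨j, h, e, rfl⟩)

/-- Induction for `stab S s` by left multiplication with generators. -/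
lemma stab_induction {S : Finset ι} {s : ι} {p : Q → Prop} (one : p 1)
    (ht : ∀ i ∈ S, ∀ j ∈ S, i ≠ j → ∀ e q, p q → p (D.t i j e * q))
    (hsp : ∀ σ ε, (∀ k ∉ S, σ k = k ∧ ε k = 1) → ∀ q, p q → p (D.sp σ ε * q))
    (hrow : ∀ j, s ≠ j → ∀ e q, p q → p (D.t s j e * q))
    {q : Q} (hq : q ∈ D.stab S s) : p q := by
  have key : ∀ x ∈ D.block S, ∀ y, p y → p (x * y) := by
    intro x hx
    refine block_induction (p := fun x => ∀ y, p y → p (x * y)) ?_ ?_ ?_ hx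
    · simp
    · intro i hi j hj hij e q ih y hy
      rw [mul_assoc]
      exact ht i hi j hj hij e _ (ih y hy)
    · intro σ ε h q ih y hy
      rw [mul_assoc]
      exact hsp σ ε h _ (ih y hy)
  induction hq using Subgroup.closure_induction_left with
  | one => exact one
  | mul_left x hx y _ ih =>
    rcases hx with hx | ⟨j, hj, e, rfl⟩
    · exact key x hx y ih
    · exact hrow j hj e y ih
  | inv_mul_cancel x hx y _ ih =>
    rcases hx with hx | ⟨j, hj, e, rfl⟩
    · exact key _ (inv_mem hx) y ih
    · rw [← D.t_neg hj]
      exact hrow j hj (-e) y ih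

lemma M_col_of_mem_stab {S : Finset ι} {s : ι} (hs : s ∉ S) {q : Q} (hq : q ∈ D.stab S s)
    (k : ι) : D.M q k s = (1 : Matrix ι ι ℤ) k s := by
  have hz : ∀ j, s ≠ j → (1 : Matrix ι ι ℤ) j s = 0 := fun j h => Matrix.one_apply_ne h.symm
  revert k
  refine stab_induction (p := fun q => ∀ k, D.M q k s = (1 : Matrix ι ι ℤ) k s) ?_ ?_ ?_ ?_ hq
  · simp
  · intro i hi j hj hij e q ih k
    have hsj : s ≠ j := by rintro rfl; exact hs hj
    simp [M_t_mul_apply _ hij, ih, hz j hsj]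
  · intro σ ε h q ih k
    obtain ⟨k, rfl⟩ := σ.surjective k
    rw [M_sp_mul_apply, ih]
    obtain ⟨h1, h2⟩ := h s hs
    by_cases hk : k = s
    · subst hk
      rw [h1]
      simp [h2]
    · have : σ k ≠ s := fun h' => hk (σ.injective (h'.trans h1.symm))
      simp [Matrix.one_apply_ne hk, Matrix.one_apply_ne this]
  · intro j hj e q ih k
    simp [M_t_mul_apply _ hj, ih, hz j hj]

section Row

variable (D) in
/-- The subgroup generated by the elementary elements in row `s`. -/
def row (s : ι) : Subgroup Q := Subgroup.closure {q | ∃ j, s ≠ j ∧ ∃ e, q = D.t s j e}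

variable {s : ι}

lemma t_mem_row {j : ι} (hj : s ≠ j) (e : ℤˣ) : D.t s j e ∈ D.row s :=
  Subgroup.subset_closure ⟨j, hj, e, rfl⟩

/-- Induction for `row s` by left multiplication with generators. -/
lemma row_induction {p : Q → Prop} (one : p 1)
    (ht : ∀ j, s ≠ j → ∀ e, ∀ q ∈ D.row s, p q → p (D.t s j e * q))
    {q : Q} (hq : q ∈ D.row s) : p q := by
  induction hq using Subgroup.closure_induction_left with
  | one => exact one
  | mul_left x hx y hy ih =>
    obtain ⟨j, hj, e, rfl⟩ := hx
    exact ht j hj e y hy ih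
  | inv_mul_cancel x hx y hy ih =>
    obtain ⟨j, hj, e, rfl⟩ := hx
    rw [← D.t_neg hj]
    exact ht j hj (-e) y hy ih

lemma M_apply_of_mem_row {a : Q} (ha : a ∈ D.row s) {k : ι} (hk : k ≠ s) (l : ι) :
    D.M a k l = (1 : Matrix ι ι ℤ) k l := by
  refine row_induction (p := fun a => D.M a k l = (1 : Matrix ι ι ℤ) k l) (by simp) ?_ ha
  intro j hj e q _ ih
  rw [M_t_mul_apply _ hj, if_neg hk, ih, add_zero]

variable (D s) in
lemma row_pairwise_commute : Pairwise fun j k => ∀ x y : Multiplicative ℤ,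
    Commute ((if s = j then 1 else zpowersHom Q (D.t s j 1)) x)
      ((if s = k then 1 else zpowersHom Q (D.t s k 1)) y) := by
  intro j k _ x y
  by_cases hj : s = j
  · simp [hj]
  by_cases hk : s = k
  · simp [hk]
  have h : Commute (D.t s j 1) (D.t s k 1) := D.t_comm hj hk (Ne.symm hj) hk 1 1
  simpa [hj, hk] using h.zpow_zpow _ _

variable (D s) in
/-- The homomorphism `c ↦ ∏ⱼ (t s j) ^ (c j)`, over `j ≠ s`. -/
noncomputable def rowHom : (ι → Multiplicative ℤ) →* Q :=
  MonoidHom.noncommPiCoprod _ (D.row_pairwise_commute s)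

lemma t_eq_rowHom {j : ι} (hj : s ≠ j) (e : ℤˣ) :
    D.t s j e = D.rowHom s (Pi.mulSingle j (Multiplicative.ofAdd (e : ℤ))) := by
  rw [rowHom, MonoidHom.noncommPiCoprod_mulSingle]
  rcases Int.units_eq_one_or e with rfl | rfl
  · simp [hj]
  · simp [hj, D.t_neg hj]

lemma eq_rowHom_of_mem_row {a : Q} (ha : a ∈ D.row s) :
    a = D.rowHom s fun l => if s = l then 1 else Multiplicative.ofAdd (D.M a s l) := by
  refine row_induction (p := fun a =>
    a = D.rowHom s fun l => if s = l then 1 else Multiplicative.ofAdd (D.M a s l)) ?_ ?_ ha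
  · rw [eq_comm]
    convert map_one (D.rowHom s) with l
    split_ifs with h
    · rfl
    · simp [Matrix.one_apply_ne h]
  · intro j hj e q hq ih
    conv_lhs => rw [ih, t_eq_rowHom hj, ← map_mul]
    congr 1
    funext l
    by_cases hl : s = l
    · subst hl
      simp [Pi.mulSingle_eq_of_ne hj]
    · rw [Pi.mul_apply, if_neg hl, if_neg hl, M_t_mul_apply _ hj, if_pos rfl,
        M_apply_of_mem_row hq hj.symm, mul_comm, ofAdd_add]
      congr 1
      by_cases h : j = l
      · subst h
        simp
      · rw [Pi.mulSingle_eq_of_ne (Ne.symm h), Matrix.one_apply_ne h]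
        simp

lemma eq_one_of_mem_row {a : Q} (ha : a ∈ D.row s) (h : ∀ l, s ≠ l → D.M a s l = 0) :
    a = 1 := by
  rw [eq_rowHom_of_mem_row ha]
  convert map_one (D.rowHom s) with l
  split_ifs with hl
  · rfl
  · simp [h l hl]

lemma conj_row_of_generator {x : Q}
    (h : ∀ j, s ≠ j → ∀ e, ∃ b ∈ D.row s, x * D.t s j e = b * x) {a : Q} (ha : a ∈ D.row s) :
    ∃ b ∈ D.row s, x * a = b * x := by
  refine row_induction (p := fun a => ∃ b ∈ D.row s, x * a = b * x)
    ⟨1, one_mem _, by simp⟩ ?_ ha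
  rintro j hj e q _ ⟨b, hb, hbx⟩
  obtain ⟨c, hc, hcx⟩ := h j hj e
  exact ⟨c * b, mul_mem hc hb, by rw [← mul_assoc, hcx, mul_assoc, hbx, mul_assoc]⟩

lemma exists_row_mul_block {S : Finset ι} (hs : s ∉ S) {u : Q} (hu : u ∈ D.stab S s) :
    ∃ a ∈ D.row s, ∃ h ∈ D.block S, u = a * h := by
  refine stab_induction (p := fun u => ∃ a ∈ D.row s, ∃ h ∈ D.block S, u = a * h)
    ⟨1, one_mem _, 1, one_mem _, by simp⟩ ?_ ?_ ?_ hu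
  · rintro i hi j hj hij e _ ⟨a, ha, h, hh, rfl⟩
    have hsi : s ≠ i := by rintro rfl; exact hs hi
    have hsj : s ≠ j := by rintro rfl; exact hs hj
    obtain ⟨b, hb, hbx⟩ := conj_row_of_generator (x := D.t i j e) (s := s) (D := D) (by
      intro k hk d
      by_cases hik : i = k
      · subst hik
        refine ⟨D.t s j (-(d * e)) * D.t s i d,
          mul_mem (t_mem_row hsj _) (t_mem_row hsi _), ?_⟩
        rw [mul_assoc, D.t_triangle hsi hij hsj, D.t_neg hsj, mul_assoc, inv_mul_cancel_left]
      · exact ⟨D.t s k d, t_mem_row hk d, D.t_comm hij hk hsj.symm hik e d⟩) ha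
    exact ⟨b, hb, D.t i j e * h, mul_mem (t_mem_block hi hj hij e) hh, by
      rw [← mul_assoc, hbx, mul_assoc]⟩
  · rintro σ ε hσ _ ⟨a, ha, h, hh, rfl⟩
    obtain ⟨b, hb, hbx⟩ := conj_row_of_generator (x := D.sp σ ε) (s := s) (D := D) (by
      intro k hk d
      have hsk : s ≠ σ k := fun h' => hk (σ.injective (((hσ s hs).1).trans h'))
      refine ⟨_, ?_, D.sp_t hk σ ε d⟩
      rw [(hσ s hs).1]
      exact t_mem_row hsk _) ha
    exact ⟨b, hb, D.sp σ ε * h, mul_mem (sp_mem_block hσ) hh, by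
      rw [← mul_assoc, hbx, mul_assoc]⟩
  · rintro j hj e _ ⟨a, ha, h, hh, rfl⟩
    exact ⟨D.t s j e * a, mul_mem (t_mem_row hj e) ha, h, hh, by rw [mul_assoc]⟩

/-- If `block S` maps injectively to matrices, then so does `stab S s`. -/
lemma eq_one_of_mem_stab {S : Finset ι} (hs : s ∉ S)
    (ih : ∀ q ∈ D.block S, D.M q = 1 → q = 1) {u : Q} (hu : u ∈ D.stab S s)
    (h1 : D.M u = 1) : u = 1 := by
  obtain ⟨a, ha, h, hh, rfl⟩ := exists_row_mul_block hs hu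
  have hM : D.M a = D.M h⁻¹ := by
    rw [map_mul] at h1
    calc D.M a = D.M a * (D.M h * D.M h⁻¹) := by rw [← map_mul]; simp
      _ = D.M h⁻¹ := by rw [← mul_assoc, h1, one_mul]
  have ha1 : a = 1 := eq_one_of_mem_row ha fun l hl => by
    rw [hM, M_row_of_mem_block hs (inv_mem hh), Matrix.one_apply_ne hl]
  subst ha1
  rw [map_mul, map_one, one_mul] at h1
  rw [one_mul]
  exact ih h hh h1

end Row
section Reduction

/-- Adding `y` to `x` strictly increases the absolute value without cancellation. -/
def Grows (x y : ℤ) : Prop := (0 ≤ x ∧ 0 < y) ∨ (x ≤ 0 ∧ y < 0)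

variable (D) in
/-- The elements obtained from signed permutations by elementary steps that increase the
`s`-th column without cancellation, up to right multiplication by `stab S s`. Here the
signed permutations and elementary elements are supported on `insert s S`. -/
inductive Reduces (S : Finset ι) (s : ι) : Q → Prop
  | base (σ : Equiv.Perm ι) (ε : ι → ℤˣ) (h : ∀ k ∉ insert s S, σ k = k ∧ ε k = 1) (u : Q)
      (hu : u ∈ D.stab S s) : Reduces S s (D.sp σ ε * u)
  | step (i j : ι) (e : ℤˣ) (q : Q) (hi : i ∈ insert s S) (hj : j ∈ insert s S) (hij : i ≠ j)
      (hq : Reduces S s q) (h : Grows (D.M q i s) (e * D.M q j s)) : Reduces S s (D.t i j e * q)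

variable (D) in
/-- The elementary element `t i j (-e)` decreases the `s`-th column of `q`. -/
structure Shrinks (S : Finset ι) (s : ι) (q : Q) (i j : ι) (e : ℤˣ) : Prop where
  left_mem : i ∈ insert s S
  right_mem : j ∈ insert s S
  ne : i ≠ j
  grows : Grows (D.M q i s - e * D.M q j s) (e * D.M q j s)

variable (D) in
/-- The `ℓ¹`-norm of the `s`-th column. -/
def colNorm (s : ι) (q : Q) : ℕ := ∑ i, (D.M q i s).natAbs

variable {S : Finset ι} {s : ι} {q : Q}

lemma t_neg_mul_cancel {i j : ι} (hij : i ≠ j) (e : ℤˣ) (q : Q) :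
    D.t i j e * (D.t i j (-e) * q) = q := by
  rw [D.t_neg hij, mul_inv_cancel_left]

lemma Reduces.climb {i j : ι} {e : ℤˣ} (h : D.Shrinks S s q i j e)
    (hq : D.Reduces S s (D.t i j (-e) * q)) : D.Reduces S s q := by
  rw [← t_neg_mul_cancel h.ne e q]
  refine .step i j e _ h.left_mem h.right_mem h.ne hq ?_
  have := h.grows
  simp only [M_t_mul_apply _ h.ne, h.ne.symm, if_true, if_false]
  convert this using 1
  · push_cast; ring
  · simp

lemma colNorm_t_lt {i j : ι} {e : ℤˣ} (h : D.Shrinks S s q i j e) :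
    D.colNorm s (D.t i j (-e) * q) < D.colNorm s q := by
  have := h.grows
  refine Finset.sum_lt_sum (fun k _ => ?_) ⟨i, Finset.mem_univ _, ?_⟩
  · rw [M_t_mul_apply _ h.ne]
    split_ifs with hk
    · subst hk
      unfold Grows at this
      push_cast
      rw [neg_mul]
      omega
    · simp
  · rw [M_t_mul_apply _ h.ne, if_pos rfl]
    unfold Grows at this
    push_cast
    rw [neg_mul]
    omega

lemma M_t_mul_of_eq_zero {i j : ι} (hij : i ≠ j) (e : ℤˣ) (hj : D.M q j s = 0) (k : ι) :
    D.M (D.t i j e * q) k s = D.M q k s := by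
  simp [M_t_mul_apply _ hij, hj]

lemma colNorm_t_of_eq_zero {i j : ι} (hij : i ≠ j) (e : ℤˣ) (hj : D.M q j s = 0) :
    D.colNorm s (D.t i j e * q) = D.colNorm s q := by
  simp only [colNorm, M_t_mul_of_eq_zero hij e hj]

lemma Reduces.sp_mul (hq : D.Reduces S s q) {σ : Equiv.Perm ι} {ε : ι → ℤˣ}
    (h : ∀ k ∉ insert s S, σ k = k ∧ ε k = 1) : D.Reduces S s (D.sp σ ε * q) := by
  induction hq with
  | base σ' ε' h' u hu =>
    rw [← mul_assoc, D.sp_mul]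
    exact .base _ _ (fixes_mul h h') u hu
  | step i j e q hi hj hij hq hg ih =>
    rw [← mul_assoc, D.sp_t hij, mul_assoc]
    refine .step _ _ _ _ (perm_mem h hi) (perm_mem h hj) (σ.injective.ne hij) ih ?_
    rw [M_sp_mul_apply, M_sp_mul_apply]
    unfold Grows at hg ⊢
    rcases Int.units_eq_one_or (ε i) with h1 | h1 <;>
      rcases Int.units_eq_one_or (ε j) with h2 | h2 <;>
      simp [h1, h2] <;> omega

variable (D) in
/-- The elementary elements supported on `S` in column `j`. -/
def colSet (S : Finset ι) (j : ι) : Set Q := {q | ∃ i ∈ S, i ≠ j ∧ ∃ e, q = D.t i j e}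

lemma M_mul_of_mem_colSet {j : ι} {x : Q} (hx : x ∈ Submonoid.closure (D.colSet S j))
    (hj : D.M q j s = 0) (k : ι) : D.M (x * q) k s = D.M q k s := by
  induction hx using Submonoid.closure_induction_left generalizing k with
  | one => simp
  | mul_left x hx y _ ih =>
    obtain ⟨i, -, hij, e, rfl⟩ := hx
    rw [mul_assoc, M_t_mul_of_eq_zero hij _ (by rw [ih, hj]), ih]

lemma exists_colSet_mul_t {j k l : ι} (hk : k ∈ S) (hkl : k ≠ l) (hjk : j ≠ k) (hjl : j ≠ l)
    (d : ℤˣ) {x : Q} (hx : x ∈ Submonoid.closure (D.colSet S j)) :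
    ∃ x' ∈ Submonoid.closure (D.colSet S j), x * D.t k l d = D.t k l d * x' := by
  induction hx using Submonoid.closure_induction_left with
  | one => exact ⟨1, one_mem _, by simp⟩
  | mul_left x hx y _ ih =>
    obtain ⟨i, hi, hij, e, rfl⟩ := hx
    obtain ⟨y', hy', hy⟩ := ih
    rw [mul_assoc, hy]
    by_cases hil : i = l
    · subst hil
      refine ⟨D.t i j e * (D.t k j (-(d * e)) * y'), mul_mem (Submonoid.subset_closure
        ⟨i, hi, hij, e, rfl⟩) (mul_mem (Submonoid.subset_closure ⟨k, hk, hjk.symm, _, rfl⟩) hy'), ?_⟩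
      have h1 : Commute (D.t k j (d * e)) (D.t i j e) := D.t_comm hjk.symm hij hjl hjk.symm _ _
      have h2 : Commute (D.t k j (d * e)) (D.t k i d) := D.t_comm hjk.symm hkl hjk hkl _ _
      rw [← mul_assoc _ (D.t i j e), D.t_triangle hkl hij hjk.symm, D.t_neg hjk.symm,
        mul_assoc _ _ (D.t k i d), (h1.mul_right h2).eq]
      simp [mul_assoc]
    · refine ⟨D.t i j e * y', mul_mem (Submonoid.subset_closure ⟨i, hi, hij, e, rfl⟩) hy', ?_⟩
      rw [← mul_assoc, D.t_comm hij hkl hjk hil, mul_assoc]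

lemma Reduces.mul_of_mem_colSet (hs : s ∉ S) (hq : D.Reduces S s q) {j : ι}
    (hj : j ∈ insert s S) (h0 : D.M q j s = 0) {x : Q}
    (hx : x ∈ Submonoid.closure (D.colSet (insert s S) j)) : D.Reduces S s (x * q) := by
  induction hq generalizing x with
  | base σ ε h u hu =>
    obtain ⟨j, rfl⟩ := σ.surjective j
    have hmem : ∀ {k}, σ k ∈ insert s S → k ∈ insert s S := fun {k} hk => by
      simpa using perm_mem (fixes_inv h) hk
    have hjs : s ≠ j := by
      rintro rfl
      rw [M_sp_mul_apply, M_col_of_mem_stab hs hu] at h0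
      simp at h0
    obtain ⟨x', hx', hxx'⟩ : ∃ x' ∈ D.stab S s, x * D.sp σ ε = D.sp σ ε * x' := by
      induction hx using Submonoid.closure_induction_left with
      | one => exact ⟨1, one_mem _, by simp⟩
      | mul_left x hx y _ ih =>
        obtain ⟨i, hi, hij, e, rfl⟩ := hx
        obtain ⟨i, rfl⟩ := σ.surjective i
        obtain ⟨y', hy', hy⟩ := ih
        have hij' : i ≠ j := fun h => hij (h ▸ rfl)
        refine ⟨D.t i j (ε i * ε j * e) * y', mul_mem ?_ hy', ?_⟩
        · by_cases his : s = i
          · subst his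
            exact t_mem_stab S hjs _
          · exact block_le_stab S s (t_mem_block
              (Finset.mem_of_mem_insert_of_ne (hmem hi) (Ne.symm his))
              (Finset.mem_of_mem_insert_of_ne (hmem hj) (Ne.symm hjs)) hij' _)
        · rw [mul_assoc, hy, ← mul_assoc, ← mul_assoc, D.sp_t hij']
          congr 3
          rw [← mul_assoc, mul_mul_mul_comm]
          simp
    rw [← mul_assoc, hxx', mul_assoc]
    exact .base σ ε h _ (mul_mem hx' hu)
  | step k l d q hk hl hkl hq hg ih =>
    have hjk : j ≠ k := by
      rintro rfl
      rw [M_t_mul_apply _ hkl, if_pos rfl] at h0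
      unfold Grows at hg
      omega
    have h0' : D.M q j s = 0 := by
      rwa [M_t_mul_apply _ hkl, if_neg hjk, add_zero] at h0
    have hjl : j ≠ l := by
      rintro rfl
      simp [Grows, h0'] at hg
    obtain ⟨x', hx', hxx'⟩ := exists_colSet_mul_t hk hkl hjk hjl d hx
    rw [← mul_assoc, hxx', mul_assoc]
    refine .step k l d _ hk hl hkl (ih h0' hx') ?_
    rwa [M_mul_of_mem_colSet hx' h0', M_mul_of_mem_colSet hx' h0']

/-- Elementary elements that fix the `s`-th column preserve `Reduces`. -/
lemma Reduces.t_mul_of_eq_zero (hs : s ∉ S) (hq : D.Reduces S s q) {i j : ι}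
    (hi : i ∈ insert s S) (hj : j ∈ insert s S) (hij : i ≠ j) (e : ℤˣ) (h0 : D.M q j s = 0) :
    D.Reduces S s (D.t i j e * q) :=
  hq.mul_of_mem_colSet hs hj h0 (Submonoid.subset_closure ⟨i, hi, hij, e, rfl⟩)

section Confluence

variable {i j k l : ι} {e d : ℤˣ}

variable (D S s q) in
/-- `Reduces` is preserved by all decreasing elementary steps below the norm of `q`. -/
def ConfluentBelow : Prop := ∀ q', D.colNorm s q' < D.colNorm s q → D.Reduces S s q' →
  ∀ i j e, D.Shrinks S s q' i j e → D.Reduces S s (D.t i j (-e) * q')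

lemma Reduces.of_disjoint (ih : D.ConfluentBelow S s q) (h1 : D.Shrinks S s q i j e)
    (h2 : D.Shrinks S s q k l d) (hki : k ≠ i) (hjk : j ≠ k) (hil : i ≠ l)
    (hq : D.Reduces S s (D.t i j (-e) * q)) : D.Reduces S s (D.t k l (-d) * q) := by
  have h3 := ih _ (colNorm_t_lt h1) hq k l d ⟨h2.left_mem, h2.right_mem, h2.ne, by
    simpa [M_t_mul_apply _ h1.ne, hki, hil.symm] using h2.grows⟩
  rw [← mul_assoc, D.t_comm h2.ne h1.ne hil.symm hjk.symm, mul_assoc] at h3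
  refine Reduces.climb ⟨h1.left_mem, h1.right_mem, h1.ne, ?_⟩ h3
  simpa [M_t_mul_apply _ h2.ne, hki.symm, hjk] using h1.grows

lemma t_neg_mul_t_neg (hij : i ≠ j) (hjl : j ≠ l) (hil : i ≠ l) (q : Q) :
    D.t j l (-d) * (D.t i j (-e) * q) =
      D.t i l (-(e * d)) * (D.t i j (-e) * (D.t j l (-d) * q)) := by
  rw [← mul_assoc (D.t i j _), D.t_triangle hij hjl hil, D.t_neg hil]
  simp [mul_assoc]

/-- The column of `t i j (-e) * t j l (-d) * q` still shrinks along `(i, l)`. -/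
lemma Shrinks.chain (h1 : D.Shrinks S s q i j e) (h2 : D.Shrinks S s q j l d) (hil : i ≠ l) :
    D.Shrinks S s (D.t i j (-e) * (D.t j l (-d) * q)) i l (e * d) := by
  refine ⟨h1.left_mem, h2.right_mem, hil, ?_⟩
  have g1 := h1.grows
  have g2 := h2.grows
  simp only [M_t_mul_apply _ h1.ne, M_t_mul_apply _ h2.ne, h1.ne, h2.ne.symm, hil.symm, if_true,
    if_false]
  unfold Grows at g1 g2 ⊢
  rcases Int.units_eq_one_or e with rfl | rfl <;> rcases Int.units_eq_one_or d with rfl | rfl <;>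
    simp at g1 g2 ⊢ <;> omega

lemma Shrinks.chain_left (h1 : D.Shrinks S s q i j e) (h2 : D.Shrinks S s q j l d)
    (h0 : D.M (D.t j l (-d) * q) j s ≠ 0) : D.Shrinks S s (D.t j l (-d) * q) i j e := by
  refine ⟨h1.left_mem, h1.right_mem, h1.ne, ?_⟩
  have g1 := h1.grows
  have g2 := h2.grows
  simp only [M_t_mul_apply _ h2.ne, h1.ne, if_true, if_false] at h0 ⊢
  unfold Grows at g1 g2 ⊢
  rcases Int.units_eq_one_or e with rfl | rfl <;> rcases Int.units_eq_one_or d with rfl | rfl <;>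
    simp at g1 g2 h0 ⊢ <;> omega

lemma Shrinks.chain_right (h1 : D.Shrinks S s q i j e) (h2 : D.Shrinks S s q j l d)
    (hil : i ≠ l) : D.Shrinks S s (D.t i j (-e) * q) j l d :=
  ⟨h2.left_mem, h2.right_mem, h2.ne, by
    simpa [M_t_mul_apply _ h1.ne, h1.ne.symm, hil.symm] using h2.grows⟩

lemma Reduces.of_chain (hs : s ∉ S) (ih : D.ConfluentBelow S s q) (h1 : D.Shrinks S s q i j e)
    (h2 : D.Shrinks S s q j l d) (hil : i ≠ l)
    (hq : D.Reduces S s (D.t i j (-e) * q)) : D.Reduces S s (D.t j l (-d) * q) := by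
  have h3 := ih _ (colNorm_t_lt h1) hq j l d (h1.chain_right h2 hil)
  rw [t_neg_mul_t_neg h1.ne h2.ne hil] at h3
  have h4 := Reduces.climb (h1.chain h2 hil) h3
  by_cases h0 : D.M (D.t j l (-d) * q) j s = 0
  · rw [← t_neg_mul_cancel h1.ne e (D.t j l (-d) * q)]
    refine h4.t_mul_of_eq_zero hs h1.left_mem h1.right_mem h1.ne e ?_
    rw [M_t_mul_of_eq_zero h1.ne _ h0, h0]
  · exact h4.climb (h1.chain_left h2 h0)

lemma Reduces.of_chain' (hs : s ∉ S) (ih : D.ConfluentBelow S s q) (h1 : D.Shrinks S s q i j e)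
    (h2 : D.Shrinks S s q j l d) (hil : i ≠ l)
    (hq : D.Reduces S s (D.t j l (-d) * q)) : D.Reduces S s (D.t i j (-e) * q) := by
  have h3 : D.Reduces S s (D.t i j (-e) * (D.t j l (-d) * q)) ∧
      D.colNorm s (D.t i j (-e) * (D.t j l (-d) * q)) < D.colNorm s q := by
    by_cases h0 : D.M (D.t j l (-d) * q) j s = 0
    · refine ⟨hq.t_mul_of_eq_zero hs h1.left_mem h1.right_mem h1.ne _ h0, ?_⟩
      rw [colNorm_t_of_eq_zero h1.ne _ h0]
      exact colNorm_t_lt h2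
    · have := h1.chain_left h2 h0
      exact ⟨ih _ (colNorm_t_lt h2) hq _ _ _ this, (colNorm_t_lt this).trans (colNorm_t_lt h2)⟩
  have h4 := ih _ h3.2 h3.1 _ _ _ (h1.chain h2 hil)
  rw [← t_neg_mul_t_neg h1.ne h2.ne hil] at h4
  exact h4.climb (h1.chain_right h2 hil)

lemma Reduces.of_same_row (hs : s ∉ S) (ih : D.ConfluentBelow S s q)
    (h1 : D.Shrinks S s q i j e) (h2 : D.Shrinks S s q i l d) (hjl : j ≠ l)
    (hq : D.Reduces S s (D.t i j (-e) * q)) : D.Reduces S s (D.t i l (-d) * q) := by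
  have g1 := h1.grows
  have g2 := h2.grows
  rcases le_total (D.M q l s).natAbs (D.M q j s).natAbs with hle | hle
  · have h3 : D.Shrinks S s q j l (e * d) := ⟨h1.right_mem, h2.right_mem, hjl, by
      unfold Grows at g1 g2 ⊢
      rcases Int.units_eq_one_or e with rfl | rfl <;>
        rcases Int.units_eq_one_or d with rfl | rfl <;> simp at g1 g2 ⊢ <;> omega⟩
    exact (hq.of_chain hs ih h1 h3 h2.ne).of_disjoint ih h3 h2 h1.ne h2.ne.symm hjl
  · have h3 : D.Shrinks S s q l j (e * d) := ⟨h2.right_mem, h1.right_mem, hjl.symm, by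
      unfold Grows at g1 g2 ⊢
      rcases Int.units_eq_one_or e with rfl | rfl <;>
        rcases Int.units_eq_one_or d with rfl | rfl <;> simp at g1 g2 ⊢ <;> omega⟩
    exact (hq.of_disjoint ih h1 h3 h2.ne.symm hjl h1.ne).of_chain' hs ih h2 h3 h1.ne

omit [Fintype ι] in
lemma swap_fixes {ε : ι → ℤˣ} (hi : i ∈ S) (hj : j ∈ S) (h : ∀ k, k ≠ i → k ≠ j → ε k = 1) :
    ∀ k ∉ S, Equiv.swap i j k = k ∧ ε k = 1 := by
  intro k hk
  have h1 : k ≠ i := by rintro rfl; exact hk hi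
  have h2 : k ≠ j := by rintro rfl; exact hk hj
  exact ⟨Equiv.swap_apply_of_ne_of_ne h1 h2, h k h1 h2⟩

lemma Reduces.of_swap (hs : s ∉ S) (h1 : D.Shrinks S s q i j e) (h2 : D.Shrinks S s q j i d)
    (hq : D.Reduces S s (D.t i j (-e) * q)) : D.Reduces S s (D.t j i (-d) * q) := by
  have g1 := h1.grows
  have g2 := h2.grows
  have hed : d = e := by
    unfold Grows at g1 g2
    rcases Int.units_eq_one_or e with rfl | rfl <;>
        rcases Int.units_eq_one_or d with rfl | rfl <;> simp at g1 g2 ⊢ <;> omega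
  subst hed
  obtain ⟨ε, hε, hw⟩ := D.weyl h1.ne d
  have key : D.t j i (-d) * q =
      D.t i j (-d) * (D.sp (Equiv.swap i j) ε * (D.t i j (-d) * q)) := by
    rw [← hw, D.t_neg h1.ne]
    simp [mul_assoc]
  rw [key]
  refine (hq.sp_mul (swap_fixes h1.left_mem h1.right_mem hε)).t_mul_of_eq_zero hs
    h1.left_mem h1.right_mem h1.ne _ ?_
  have := D.M_sp_mul_apply (Equiv.swap i j) ε (D.t i j (-d) * q) i s
  rw [Equiv.swap_apply_left] at this
  rw [this, M_t_mul_apply _ h1.ne, if_pos rfl]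
  unfold Grows at g1 g2
  rcases Int.units_eq_one_or d with rfl | rfl <;> simp at g1 g2 ⊢ <;> omega

lemma Reduces.shrink (hs : s ∉ S) (hq : D.Reduces S s q) (h : D.Shrinks S s q k l d) :
    D.Reduces S s (D.t k l (-d) * q) := by
  induction hm : D.colNorm s q using Nat.strong_induction_on generalizing q k l d with
  | _ m ih =>
  have ih' : D.ConfluentBelow S s q := fun q' hlt hq' i j e h' => ih _ (hm ▸ hlt) hq' h' rfl
  cases hq with
  | base σ ε hσ u hu =>
    exfalso
    have hcol : ∀ k, D.M (D.sp σ ε * u) (σ k) s = ε k * (1 : Matrix ι ι ℤ) k s := fun k => by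
      rw [M_sp_mul_apply, M_col_of_mem_stab hs hu]
    have g := h.grows
    have hne := h.ne
    obtain ⟨k, rfl⟩ := σ.surjective k
    obtain ⟨l, rfl⟩ := σ.surjective l
    rw [hcol, hcol] at g
    by_cases hk : k = s
    · have hl : l ≠ s := by rintro rfl; exact hne (hk ▸ rfl)
      simp [Matrix.one_apply_ne hl, Grows] at g
    · rw [Matrix.one_apply_ne hk] at g
      unfold Grows at g
      simp at g
      omega
  | step i j e q hi hj hij hq hg =>
    have h1 : D.Shrinks S s (D.t i j e * q) i j e := ⟨hi, hj, hij, by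
      simpa [M_t_mul_apply _ hij, hij.symm] using hg⟩
    have hq' : D.Reduces S s (D.t i j (-e) * (D.t i j e * q)) := by
      rwa [D.t_neg hij, inv_mul_cancel_left]
    by_cases hik : i = k
    · subst hik
      by_cases hjl : j = l
      · subst hjl
        have hed : d = e := by
          have g1 := h1.grows
          have g2 := h.grows
          unfold Grows at g1 g2
          rcases Int.units_eq_one_or e with rfl | rfl <;>
            rcases Int.units_eq_one_or d with rfl | rfl <;> simp at g1 g2 ⊢ <;> omega
        rwa [hed]
      · exact hq'.of_same_row hs ih' h1 h hjl
    · by_cases hjk : j = k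
      · subst hjk
        by_cases hil : i = l
        · subst hil
          exact hq'.of_swap hs h1 h
        · exact hq'.of_chain hs ih' h1 h hil
      · by_cases hil : i = l
        · subst hil
          exact hq'.of_chain' hs ih' h h1 (Ne.symm hjk)
        · exact hq'.of_disjoint ih' h1 h (Ne.symm hik) hjk hil

lemma Reduces.t_mul (hs : s ∉ S) (hq : D.Reduces S s q) (hi : i ∈ insert s S)
    (hj : j ∈ insert s S) (hij : i ≠ j) (e : ℤˣ) : D.Reduces S s (D.t i j e * q) := by
  by_cases h0 : D.M q j s = 0
  · exact hq.t_mul_of_eq_zero hs hi hj hij e h0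
  by_cases hup : Grows (D.M q i s) (e * D.M q j s)
  · exact .step i j e q hi hj hij hq hup
  by_cases hdown : Grows (D.M q i s - (-e : ℤˣ) * D.M q j s) ((-e : ℤˣ) * D.M q j s)
  · simpa using hq.shrink hs ⟨hi, hj, hij, hdown⟩
  have hsh : D.Shrinks S s q j i (-e) := ⟨hj, hi, hij.symm, by
    unfold Grows at hup hdown ⊢
    rcases Int.units_eq_one_or e with rfl | rfl <;> simp at hup hdown ⊢ <;> omega⟩
  have h1 := hq.shrink hs hsh
  obtain ⟨ε, hε, hw⟩ := D.weyl hij e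
  have key : D.t i j e * q =
      D.sp (Equiv.swap i j) ε * (D.t i j (-e) * (D.t j i (- -e) * q)) := by
    rw [← hw, neg_neg, D.t_neg hij, D.t_neg hij.symm]
    simp [mul_assoc]
  rw [key]
  refine Reduces.sp_mul (.step i j (-e) _ hi hj hij h1 ?_) (swap_fixes hi hj hε)
  have g := hsh.grows
  simp only [M_t_mul_apply _ hij.symm, hij, if_true, if_false]
  unfold Grows at hup hdown g ⊢
  rcases Int.units_eq_one_or e with rfl | rfl <;> simp at hup hdown g ⊢ <;> omega

end Confluence

lemma Reduces.of_mem_block (hs : s ∉ S) (hq : q ∈ D.block (insert s S)) : D.Reduces S s q := by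
  refine block_induction (p := D.Reduces S s) ?_ ?_ ?_ hq
  · simpa [sp_one] using Reduces.base (D := D) (S := S) (s := s) 1 1 (by simp) 1 (one_mem _)
  · exact fun i hi j hj hij e q h => h.t_mul hs hi hj hij e
  · exact fun σ ε h q hq => hq.sp_mul h

lemma Reduces.mem_stab (hs : s ∉ S) (hq : D.Reduces S s q)
    (h : ∀ k, D.M q k s = (1 : Matrix ι ι ℤ) k s) : q ∈ D.stab S s := by
  cases hq with
  | base σ ε hσ u hu =>
    refine mul_mem (block_le_stab S s (sp_mem_block fun k hk => ?_)) hu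
    by_cases hks : k = s
    · subst hks
      have h1 := h (σ k)
      rw [M_sp_mul_apply, M_col_of_mem_stab hs hu, Matrix.one_apply_eq, mul_one] at h1
      have h2 : σ k = k := by
        by_contra hne
        rw [Matrix.one_apply_ne hne] at h1
        exact (ε k).ne_zero h1
      rw [h2, Matrix.one_apply_eq] at h1
      exact ⟨h2, Units.ext h1⟩
    · exact hσ k (by simp [hks, hk])
  | step i j e q hi hj hij hq hg =>
    exfalso
    have h1 := h i
    have h2 := h j
    rw [M_t_mul_apply _ hij] at h1 h2
    rw [if_pos rfl] at h1
    rw [if_neg hij.symm, add_zero] at h2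
    rw [h2] at h1 hg
    by_cases hjs : j = s
    · subst hjs
      rw [Matrix.one_apply_ne hij] at h1
      unfold Grows at hg
      omega
    · rw [Matrix.one_apply_ne hjs] at hg
      simp [Grows] at hg

end Reduction

/-- In a Steinberg system, an element of the subgroup generated by elementary elements and signed
permutations is determined by its matrix. -/
theorem eq_one_of_mem_block (S : Finset ι) : ∀ q ∈ D.block S, D.M q = 1 → q = 1 := by
  induction S using Finset.induction_on with
  | empty =>
    intro q hq _
    refine block_induction (p := fun q : Q => q = (1 : Q)) rfl (by simp) ?_ hq
    rintro σ ε h _ rfl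
    have hσ : σ = 1 := Equiv.ext fun k => (h k (by simp)).1
    have hε : ε = 1 := funext fun k => (h k (by simp)).2
    rw [hσ, hε, sp_one, mul_one]
  | insert s S hs ih =>
    intro q hq h1
    exact eq_one_of_mem_stab hs ih
      ((Reduces.of_mem_block hs hq).mem_stab hs fun k => by rw [h1]) h1

end SteinbergSystem

section Generators

open FreeGroup

lemma frAut_ext {n : ℕ} {g h : FrAut n} (H : ∀ i, g (of i) = h (of i)) : g = h := by
  have : g.toMonoidHom = h.toMonoidHom := FreeGroup.ext_hom _ _ H
  exact MulEquiv.ext fun x => DFunLike.congr_fun this x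

variable {n : ℕ} {i j k l : Fin n}

/-- The endomorphism `x_j ↦ x_j x_i ^ e`. -/
def rightHom (i j : Fin n) (e : ℤˣ) : FreeGroup (Fin n) →* FreeGroup (Fin n) :=
  FreeGroup.lift fun k => if k = j then of j * of i ^ (e : ℤ) else of k

/-- The endomorphism `x_j ↦ x_i ^ e x_j`. -/
def leftHom (i j : Fin n) (e : ℤˣ) : FreeGroup (Fin n) →* FreeGroup (Fin n) :=
  FreeGroup.lift fun k => if k = j then of i ^ (e : ℤ) * of j else of k

lemma rightHom_comp (hij : i ≠ j) (e : ℤˣ) :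
    (rightHom i j (-e)).comp (rightHom i j e) = MonoidHom.id _ := by
  refine FreeGroup.ext_hom _ _ fun k => ?_
  by_cases hk : k = j <;> simp [rightHom, hk, hij]

lemma leftHom_comp (hij : i ≠ j) (e : ℤˣ) :
    (leftHom i j (-e)).comp (leftHom i j e) = MonoidHom.id _ := by
  refine FreeGroup.ext_hom _ _ fun k => ?_
  by_cases hk : k = j <;> simp [leftHom, hk, hij]

/-- The right transvection `x_j ↦ x_j x_i ^ e`; trivial for `i = j`. -/
def rightT (i j : Fin n) (e : ℤˣ) : FrAut n :=
  if hij : i ≠ j then (rightHom i j e).toMulEquiv (rightHom i j (-e)) (rightHom_comp hij e)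
    (by simpa using rightHom_comp hij (-e)) else 1

/-- The left transvection `x_j ↦ x_i ^ e x_j`; trivial for `i = j`. -/
def leftT (i j : Fin n) (e : ℤˣ) : FrAut n :=
  if hij : i ≠ j then (leftHom i j e).toMulEquiv (leftHom i j (-e)) (leftHom_comp hij e)
    (by simpa using leftHom_comp hij (-e)) else 1

lemma rightT_of (hij : i ≠ j) (e : ℤˣ) : rightT i j e (of j) = of j * of i ^ (e : ℤ) := by
  simp [rightT, hij, rightHom]

lemma rightT_of_ne (hk : k ≠ j) (e : ℤˣ) : rightT i j e (of k) = of k := by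
  by_cases hij : i = j <;> simp [rightT, hij, rightHom, hk]

lemma leftT_of (hij : i ≠ j) (e : ℤˣ) : leftT i j e (of j) = of i ^ (e : ℤ) * of j := by
  simp [leftT, hij, leftHom]

lemma leftT_of_ne (hk : k ≠ j) (e : ℤˣ) : leftT i j e (of k) = of k := by
  by_cases hij : i = j <;> simp [leftT, hij, leftHom, hk]

/-- The endomorphism `x_i ↦ x_{σ i} ^ ε_i`. -/
def signedHom (σ : Equiv.Perm (Fin n)) (ε : Fin n → ℤˣ) : FreeGroup (Fin n) →* FreeGroup (Fin n) :=
  FreeGroup.lift fun k => of (σ k) ^ (ε k : ℤ)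

lemma units_zpow_zpow {G : Type*} [Group G] (x : G) (e d : ℤˣ) :
    (x ^ (e : ℤ)) ^ (d : ℤ) = x ^ ((d * e : ℤˣ) : ℤ) := by
  rw [← _root_.zpow_mul, Units.val_mul, mul_comm]

lemma signedHom_comp (σ τ : Equiv.Perm (Fin n)) (ε δ : Fin n → ℤˣ) :
    (signedHom σ ε).comp (signedHom τ δ) = signedHom (σ * τ) fun i => δ i * ε (τ i) := by
  refine FreeGroup.ext_hom _ _ fun k => ?_
  simp only [signedHom, MonoidHom.comp_apply, lift_apply_of, map_zpow, units_zpow_zpow,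
    Equiv.Perm.mul_apply]

lemma signedHom_one {ε : Fin n → ℤˣ} (h : ∀ i, ε i = 1) : signedHom 1 ε = MonoidHom.id _ := by
  refine FreeGroup.ext_hom _ _ fun k => ?_
  simp [signedHom, h]

/-- The signed permutation `x_i ↦ x_{σ i} ^ ε_i`. -/
def signedPerm (σ : Equiv.Perm (Fin n)) (ε : Fin n → ℤˣ) : FrAut n :=
  (signedHom σ ε).toMulEquiv (signedHom σ⁻¹ fun i => ε (σ⁻¹ i))
    (by rw [signedHom_comp, inv_mul_cancel, signedHom_one]; simp)
    (by rw [signedHom_comp, mul_inv_cancel, signedHom_one]; simp)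

lemma signedPerm_of (σ : Equiv.Perm (Fin n)) (ε : Fin n → ℤˣ) (k : Fin n) :
    signedPerm σ ε (of k) = of (σ k) ^ (ε k : ℤ) := by
  simp [signedPerm, signedHom]

lemma signedPerm_mul (σ τ : Equiv.Perm (Fin n)) (ε δ : Fin n → ℤˣ) :
    signedPerm σ ε * signedPerm τ δ = signedPerm (σ * τ) fun i => δ i * ε (τ i) := by
  refine frAut_ext fun k => ?_
  simp only [MulAut.mul_apply, signedPerm_of, map_zpow, units_zpow_zpow, Equiv.Perm.mul_apply]

lemma rightT_neg (hij : i ≠ j) (e : ℤˣ) : rightT i j (-e) = (rightT i j e)⁻¹ := by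
  rw [eq_inv_iff_mul_eq_one]
  refine frAut_ext fun k => ?_
  by_cases hk : k = j
  · subst hk
    simp [rightT_of hij, rightT_of_ne hij]
  · simp [rightT_of_ne hk]

lemma rightT_mul_leftT (hij : i ≠ j) (hkl : k ≠ l) (hjk : j ≠ k) (hil : i ≠ l) (e d : ℤˣ) :
    rightT i j e * leftT k l d = leftT k l d * rightT i j e := by
  refine frAut_ext fun m => ?_
  by_cases hj : m = j
  · subst hj
    by_cases hl : m = l
    · subst hl
      simp [rightT_of hij, rightT_of_ne hjk.symm, leftT_of hkl, leftT_of_ne hil, mul_assoc]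
    · simp [rightT_of hij, leftT_of_ne hil, leftT_of_ne hl]
  · by_cases hl : m = l
    · subst hl
      simp [rightT_of_ne hjk.symm, rightT_of_ne hj, leftT_of hkl]
    · simp [rightT_of_ne hj, leftT_of_ne hl]

lemma rightT_triangle (hij : i ≠ j) (hjk : j ≠ k) (hik : i ≠ k) (e : ℤˣ) :
    rightT i j e * rightT j k (-1) = rightT i k (-e) * rightT j k (-1) * rightT i j e := by
  refine frAut_ext fun m => ?_
  by_cases hj : m = j
  · subst hj
    simp [rightT_of hij, rightT_of_ne hjk, rightT_of_ne hik]
  · by_cases hk : m = k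
    · subst hk
      simp [rightT_of hij, rightT_of_ne hj, rightT_of_ne hjk, rightT_of hjk, rightT_of hik,
        mul_assoc]
    · simp [rightT_of_ne hj, rightT_of_ne hk]

lemma leftT_triangle (hij : i ≠ j) (hjk : j ≠ k) (hik : i ≠ k) (e : ℤˣ) :
    leftT i j e * rightT j k 1 = rightT i k e * rightT j k 1 * leftT i j e := by
  refine frAut_ext fun m => ?_
  by_cases hj : m = j
  · subst hj
    simp [leftT_of hij, rightT_of_ne hjk, rightT_of_ne hik]
  · by_cases hk : m = k
    · subst hk
      simp [leftT_of hij, leftT_of_ne hj, rightT_of_ne hjk, rightT_of hjk, rightT_of hik,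
        mul_assoc]
    · simp [leftT_of_ne hj, rightT_of_ne hk]

lemma signedPerm_mul_rightT (hij : i ≠ j) (σ : Equiv.Perm (Fin n)) {ε : Fin n → ℤˣ}
    (h : ε j = 1) (e : ℤˣ) :
    signedPerm σ ε * rightT i j e = rightT (σ i) (σ j) (ε i * ε j * e) * signedPerm σ ε := by
  refine frAut_ext fun m => ?_
  by_cases hj : m = j
  · subst hj
    simp only [MulAut.mul_apply, rightT_of hij, rightT_of (σ.injective.ne hij), _root_.map_mul, map_zpow,
      signedPerm_of, units_zpow_zpow, h]
    simp [mul_comm]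
  · simp [rightT_of_ne hj, rightT_of_ne (σ.injective.ne hj), signedPerm_of]

lemma signedPerm_mul_leftT (hij : i ≠ j) (σ : Equiv.Perm (Fin n)) {ε : Fin n → ℤˣ}
    (h : ε j = -1) (e : ℤˣ) :
    signedPerm σ ε * rightT i j e = leftT (σ i) (σ j) (ε i * ε j * e) * signedPerm σ ε := by
  refine frAut_ext fun m => ?_
  by_cases hj : m = j
  · subst hj
    simp only [MulAut.mul_apply, rightT_of hij, leftT_of (σ.injective.ne hij), _root_.map_mul, map_zpow,
      signedPerm_of, units_zpow_zpow, h]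
    simp [mul_comm]
  · simp [rightT_of_ne hj, leftT_of_ne (σ.injective.ne hj), signedPerm_of]

lemma weyl_one (hij : i ≠ j) : rightT i j 1 * rightT j i (-1) * leftT i j 1 =
    signedPerm (Equiv.swap i j) (Function.update 1 i (-1)) := by
  refine frAut_ext fun m => ?_
  by_cases hi : m = i
  · subst hi
    simp [leftT_of_ne hij, rightT_of hij.symm, rightT_of hij, rightT_of_ne hij, signedPerm_of]
  · by_cases hj : m = j
    · subst hj
      simp [leftT_of hij, rightT_of hij.symm, rightT_of_ne hij,
        rightT_of_ne hij.symm, signedPerm_of, hi]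
    · simp [leftT_of_ne hj, rightT_of_ne hj, rightT_of_ne hi, signedPerm_of, hi,
        Equiv.swap_apply_of_ne_of_ne hi hj]

lemma weyl_neg_one (hij : i ≠ j) : leftT i j (-1) * rightT j i 1 * rightT i j (-1) =
    signedPerm (Equiv.swap i j) (Function.update 1 j (-1)) := by
  refine frAut_ext fun m => ?_
  by_cases hi : m = i
  · subst hi
    simp [leftT_of hij, leftT_of_ne hij, rightT_of hij.symm, rightT_of_ne hij, signedPerm_of, hij]
  · by_cases hj : m = j
    · subst hj
      simp [leftT_of_ne hij, rightT_of hij.symm, rightT_of hij,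
        rightT_of_ne hij.symm, signedPerm_of]
    · simp [leftT_of_ne hj, rightT_of_ne hj, rightT_of_ne hi, signedPerm_of, hj,
        Equiv.swap_apply_of_ne_of_ne hi hj]

lemma expSum_of (k l : Fin n) : (expSum k (of l)).toAdd = if l = k then 1 else 0 := by
  simp [expSum]

lemma mat_rightT (hij : i ≠ j) (e : ℤˣ) :
    mat (rightT i j e) = Matrix.transvection i j (e : ℤ) := by
  ext k l
  rw [mat, Matrix.of_apply, Matrix.transvection, Matrix.add_apply, Matrix.one_apply,
    Matrix.single_apply]
  by_cases hl : l = j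
  · subst hl
    simp [rightT_of hij, expSum_of, eq_comm]
  · simp [rightT_of_ne hl, expSum_of, Ne.symm hl, eq_comm]

lemma mat_signedPerm (σ : Equiv.Perm (Fin n)) (ε : Fin n → ℤˣ) :
    mat (signedPerm σ ε) = Matrix.of fun k l => if k = σ l then (ε l : ℤ) else 0 := by
  ext k l
  simp [mat, signedPerm_of, expSum_of, eq_comm]

section Inversion

variable {f : FrAut n} (hf : ∀ i : Fin n, f (of i) = (of i)⁻¹)
include hf

lemma mul_rightT_of_inversion (hij : i ≠ j) (e : ℤˣ) : f * rightT i j e = leftT i j e * f := by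
  refine frAut_ext fun m => ?_
  by_cases hj : m = j
  · subst hj
    simp [rightT_of hij, leftT_of hij, hf]
  · simp [rightT_of_ne hj, leftT_of_ne hj, hf]

lemma mat_of_inversion : mat f = -1 := by
  ext k l
  simp [mat, hf, expSum_of, Matrix.one_apply, eq_comm]

lemma ρ_of_inversion : ρ n f = -1 := Units.ext (mat_of_inversion hf)

end Inversion

instance IA_normal (n : ℕ) : (IA n).Normal := by unfold IA; infer_instance

/-- The part of the normal closure of `f` lying in the Torelli subgroup. -/
def torelliPart (f : FrAut n) : Subgroup (FrAut n) := Subgroup.normalClosure {f} ⊓ IA n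

instance torelliPart_normal (f : FrAut n) : (torelliPart f).Normal := by
  unfold torelliPart; infer_instance

/-- The matrix of an element of the quotient by `torelliPart f`. -/
def quotientMat (f : FrAut n) : FrAut n ⧸ torelliPart f →* Matrix (Fin n) (Fin n) ℤ :=
  QuotientGroup.lift (torelliPart f) (matHom n) fun g hg =>
    congrArg Units.val (show ρ n g = 1 from hg.2)

lemma mk_leftT {f : FrAut n} (hf : ∀ i : Fin n, f (of i) = (of i)⁻¹) (hij : i ≠ j) (e : ℤˣ) :
    (leftT i j e : FrAut n ⧸ torelliPart f) = rightT i j e := by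
  have h := mul_rightT_of_inversion hf hij e
  have hfN : f ∈ Subgroup.normalClosure {f} := Subgroup.subset_normalClosure rfl
  rw [eq_comm, QuotientGroup.eq]
  have h' : (rightT i j e)⁻¹ * leftT i j e = (rightT i j e)⁻¹ * f * rightT i j e * f⁻¹ := by
    rw [mul_assoc _ f, h]
    group
  refine Subgroup.mem_inf.2 ⟨?_, ?_⟩
  · rw [h']
    refine mul_mem ?_ (inv_mem hfN)
    simpa using Subgroup.normalClosure_normal.conj_mem f hfN (rightT i j e)⁻¹
  · rw [h', IA, MonoidHom.mem_ker]
    simp [ρ_of_inversion hf]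

/-- The quotient by `torelliPart f` is a Steinberg system. -/
def steinbergSystem {f : FrAut n} (hf : ∀ i : Fin n, f (of i) = (of i)⁻¹) :
    SteinbergSystem (Fin n) (FrAut n ⧸ torelliPart f) where
  M := quotientMat f
  t i j e := rightT i j e
  sp σ ε := signedPerm σ ε
  t_neg hij e := by rw [rightT_neg hij]; rfl
  t_comm {i j k l} hij hkl hjk hil e d := by
    rw [← mk_leftT hf hkl]
    exact congrArg _ (rightT_mul_leftT hij hkl hjk hil e d)
  t_triangle {i j k} hij hjk hik e d := by
    rcases Int.units_eq_one_or d with rfl | rfl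
    · rw [← mk_leftT hf hij, mul_one]
      exact congrArg _ (leftT_triangle hij hjk hik e)
    · rw [mul_neg_one]
      exact congrArg _ (rightT_triangle hij hjk hik e)
  sp_mul σ ε σ' ε' := congrArg _ (signedPerm_mul σ σ' ε ε')
  sp_t {i j} hij σ ε e := by
    rcases Int.units_eq_one_or (ε j) with h | h
    · exact congrArg _ (signedPerm_mul_rightT hij σ h e)
    · rw [← mk_leftT hf (σ.injective.ne hij)]
      exact congrArg _ (signedPerm_mul_leftT hij σ h e)
  weyl {i j} hij e := by
    rcases Int.units_eq_one_or e with rfl | rfl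
    · refine ⟨Function.update 1 i (-1), fun k hk _ => by simp [hk], ?_⟩
      conv_lhs => rw [mul_assoc]; arg 2; arg 2; rw [← mk_leftT hf hij]
      rw [← mul_assoc]
      exact congrArg _ (weyl_one hij)
    · refine ⟨Function.update 1 j (-1), fun k _ hk => by simp [hk], ?_⟩
      rw [neg_neg]
      conv_lhs => arg 1; arg 1; rw [← mk_leftT hf hij]
      exact congrArg _ (weyl_neg_one hij)
  M_t hij e := mat_rightT hij e
  M_sp σ ε := mat_signedPerm σ ε

/-- The subgroup generated by right transvections and signed permutations. -/
def nielsenSubgroup (n : ℕ) : Subgroup (FrAut n) :=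
  Subgroup.closure ({g | ∃ i j, i ≠ j ∧ ∃ e, g = rightT i j e} ∪ {g | ∃ σ ε, g = signedPerm σ ε})

lemma rightT_mem (hij : i ≠ j) (e : ℤˣ) : rightT i j e ∈ nielsenSubgroup n :=
  Subgroup.subset_closure (Or.inl ⟨i, j, hij, e, rfl⟩)

lemma signedPerm_mem (σ : Equiv.Perm (Fin n)) (ε : Fin n → ℤˣ) :
    signedPerm σ ε ∈ nielsenSubgroup n :=
  Subgroup.subset_closure (Or.inr ⟨σ, ε, rfl⟩)

lemma mk_mem_block {f : FrAut n} (hf : ∀ i : Fin n, f (of i) = (of i)⁻¹) {g : FrAut n}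
    (hg : g ∈ nielsenSubgroup n) :
    (g : FrAut n ⧸ torelliPart f) ∈ (steinbergSystem hf).block Finset.univ := by
  have : nielsenSubgroup n ≤
      ((steinbergSystem hf).block Finset.univ).comap (QuotientGroup.mk' (torelliPart f)) := by
    rw [nielsenSubgroup, Subgroup.closure_le]
    rintro _ (⟨i, j, hij, e, rfl⟩ | ⟨σ, ε, rfl⟩)
    · exact SteinbergSystem.t_mem_block (D := steinbergSystem hf) (Finset.mem_univ i)
        (Finset.mem_univ j) hij e
    · exact SteinbergSystem.sp_mem_block (D := steinbergSystem hf) (σ := σ) (ε := ε) (by simp)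
  exact this hg

lemma IA_le_normalClosure {f : FrAut n} (hf : ∀ i : Fin n, f (of i) = (of i)⁻¹)
    (hN : nielsenSubgroup n = ⊤) : IA n ≤ Subgroup.normalClosure {f} := by
  intro g hg
  have h1 : (g : FrAut n ⧸ torelliPart f) = 1 :=
    SteinbergSystem.eq_one_of_mem_block Finset.univ _ (mk_mem_block hf (hN ▸ Subgroup.mem_top g))
      (congrArg Units.val (show ρ n g = 1 from hg))
  exact ((QuotientGroup.eq_one_iff g).1 h1).1

lemma mem_normalClosure_iff {f : FrAut n} (hf : ∀ i : Fin n, f (of i) = (of i)⁻¹)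
    (hIA : IA n ≤ Subgroup.normalClosure {f}) (g : FrAut n) :
    g ∈ Subgroup.normalClosure {f} ↔ (ρ n g = 1 ∨ ρ n g = -1) := by
  have hfN : f ∈ Subgroup.normalClosure {f} := Subgroup.subset_normalClosure rfl
  constructor
  · intro hg
    induction hg using Subgroup.closure_induction with
    | one => simp
    | mem x hx =>
      obtain ⟨_, rfl, c, rfl⟩ := Group.mem_conjugatesOfSet_iff.1 hx |>.imp fun _ h =>
        h.imp_right isConj_iff.1
      simp [ρ_of_inversion hf]
    | mul x y _ _ hx hy => rcases hx with hx | hx <;> rcases hy with hy | hy <;> simp [hx, hy]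
    | inv x _ hx => rcases hx with hx | hx <;> simp [hx]
  · rintro (hg | hg)
    · exact hIA hg
    · have : f * g ∈ IA n := by
        rw [IA, MonoidHom.mem_ker]
        simp [hg, ρ_of_inversion hf]
      simpa using mul_mem (inv_mem hfN) (hIA this)

end Generators

section CommonPrefix

variable {α : Type*} [DecidableEq α]

/-- The length of the longest common prefix of two lists. -/
def lcp : List α → List α → ℕ
  | a :: l, b :: m => if a = b then lcp l m + 1 else 0
  | _, _ => 0

lemma lcp_comm (l m : List α) : lcp l m = lcp m l := by
  induction l generalizing m with
  | nil => cases m <;> simp [lcp]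
  | cons a l ih =>
    cases m with
    | nil => simp [lcp]
    | cons b m => simp [lcp, ih m, eq_comm]

lemma take_eq_take_of_le_lcp {l m : List α} {k : ℕ} (h : k ≤ lcp l m) : l.take k = m.take k := by
  induction l generalizing m k with
  | nil => cases m <;> simp_all [lcp]
  | cons a l ih =>
    cases m with
    | nil => simp_all [lcp]
    | cons b m =>
      cases k with
      | zero => simp
      | succ k =>
        simp only [lcp] at h
        split_ifs at h with hab
        · rw [List.take_succ_cons, List.take_succ_cons, hab, ih (Nat.le_of_succ_le_succ h)]
        · simp at h

lemma min_lcp_le (l m p : List α) : min (lcp l m) (lcp m p) ≤ lcp l p := by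
  induction l generalizing m p with
  | nil => cases m <;> simp [lcp]
  | cons a l ih =>
    cases m with
    | nil => simp [lcp]
    | cons b m =>
      cases p with
      | nil => simp [lcp]
      | cons c p =>
        have := ih m p
        simp only [lcp]
        split_ifs <;> simp_all

end CommonPrefix

section GromovProduct

open FreeGroup

variable {α : Type*} [DecidableEq α]

omit [DecidableEq α] in
lemma invRev_take_invRev {L : List (α × Bool)} {k : ℕ} (hk : k ≤ L.length) :
    invRev ((invRev L).take k) = L.drop (L.length - k) := by
  conv_lhs => rw [← List.take_append_drop (L.length - k) L]
  rw [invRev_append, List.take_append_of_le_length, List.take_of_length_le, invRev_invRev] <;>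
    simp [invRev_length] <;> omega

lemma isReduced_invRev {l : List (α × Bool)} (hl : IsReduced l) : IsReduced (invRev l) := by
  rw [isReduced_iff_reduce_eq, reduce_invRev, hl.reduce_eq]

lemma isReduced_invRev_append {l m : List (α × Bool)} (hl : IsReduced l) (hm : IsReduced m)
    (h0 : lcp l m = 0) : IsReduced (invRev l ++ m) := by
  cases l with
  | nil => simpa [invRev] using hm
  | cons a l =>
    cases m with
    | nil => simpa using isReduced_invRev hl
    | cons b m =>
      have h1 := isReduced_invRev hl
      rw [invRev_cons] at h1 ⊢
      refine h1.append_overlap ?_ (by simp [invRev])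
      refine isReduced_cons_cons.2 ⟨fun hab => ?_, hm⟩
      have hne : a ≠ b := by
        rintro rfl
        simp [lcp] at h0
      have h2 : a.2 ≠ b.2 := fun h => hne (Prod.ext hab h)
      cases ha : a.2 <;> cases hb : b.2 <;> simp_all

lemma norm_inv_mk_mul_mk {l m : List (α × Bool)} (hl : IsReduced l) (hm : IsReduced m) :
    ((mk l)⁻¹ * mk m).norm + 2 * lcp l m = l.length + m.length := by
  have key : ∀ l m : List (α × Bool), IsReduced l → IsReduced m → lcp l m = 0 →
      ((mk l)⁻¹ * mk m).norm + 2 * lcp l m = l.length + m.length := by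
    intro l m hl hm h0
    rw [inv_mk, mul_mk, FreeGroup.norm, toWord_mk, (isReduced_invRev_append hl hm h0).reduce_eq,
      List.length_append, invRev_length, h0, mul_zero, add_zero]
  induction l generalizing m with
  | nil => exact key [] _ hl hm (by simp [lcp])
  | cons a l ih =>
    cases m with
    | nil => exact key _ [] hl hm (by simp [lcp])
    | cons b m =>
      by_cases hab : a = b
      · subst hab
        have h1 := ih (m := m) hl.tail hm.tail
        have h2 : (mk (a :: l))⁻¹ * mk (a :: m) = (mk l)⁻¹ * mk m := by
          rw [← List.singleton_append, ← mul_mk, ← List.singleton_append (l := m), ← mul_mk]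
          group
        simp only [h2, lcp, if_true, List.length_cons]
        omega
      · exact key _ _ hl hm (by simp [lcp, hab])

/-- The length of the common prefix of the reduced words of `x` and `y`. -/
def gromov (x y : FreeGroup α) : ℕ := lcp x.toWord y.toWord

lemma gromov_comm (x y : FreeGroup α) : gromov x y = gromov y x := lcp_comm _ _

lemma norm_inv_mul (x y : FreeGroup α) :
    norm (x⁻¹ * y) + 2 * gromov x y = norm x + norm y := by
  have := norm_inv_mk_mul_mk (isReduced_toWord (x := x)) (isReduced_toWord (x := y))
  rwa [mk_toWord, mk_toWord] at this

lemma norm_mul (x y : FreeGroup α) :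
    norm (x * y) + 2 * gromov x⁻¹ y = norm x + norm y := by
  simpa [norm_inv_eq] using norm_inv_mul x⁻¹ y

lemma min_gromov_le (x y z : FreeGroup α) : min (gromov x y) (gromov y z) ≤ gromov x z :=
  min_lcp_le _ _ _

lemma two_mul_gromov_inv_self_lt {x : FreeGroup α} (hx : x ≠ 1) :
    2 * gromov x⁻¹ x < norm x := by
  by_contra! h
  have hpos : 0 < norm x := Nat.pos_of_ne_zero fun h0 => hx (norm_eq_zero.1 h0)
  have hlen : x.toWord.length = norm x := rfl
  rcases Nat.even_or_odd' (norm x) with ⟨k, hk | hk⟩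
  · have h1 := take_eq_take_of_le_lcp (show k ≤ gromov x⁻¹ x by omega)
    have h2 : x.toWord.drop k = invRev (x.toWord.take k) := by
      rw [← h1, toWord_inv, invRev_take_invRev (by omega), hlen]
      congr 1
      omega
    apply hx
    rw [← mk_toWord (x := x), ← List.take_append_drop k x.toWord, h2, ← mul_mk, ← inv_mk,
      mul_inv_cancel]
  · have h1 := take_eq_take_of_le_lcp (show k + 1 ≤ gromov x⁻¹ x by omega)
    have h2 := congrArg (fun l => l[k]?) h1
    have h3 : x.toWord.length - 1 - k = k := by omega
    have h4 : k < x.toWord.length := by omega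
    simp [toWord_inv, invRev, h3, h4, Prod.ext_iff] at h2

end GromovProduct

section Nielsen

open FreeGroup

variable {n : ℕ}

/-- An injective encoding of words of a given length by natural numbers. -/
def wordVal (l : List (Fin n × Bool)) : ℕ :=
  Nat.ofDigits (2 * n + 2) (l.map fun a => 2 * (a.1 : ℕ) + a.2.toNat)

lemma wordVal_append (l m : List (Fin n × Bool)) :
    wordVal (l ++ m) = wordVal l + (2 * n + 2) ^ l.length * wordVal m := by
  simp [wordVal, Nat.ofDigits_append]

lemma eq_of_wordVal_eq {l m : List (Fin n × Bool)} (hlen : l.length = m.length)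
    (h : wordVal l = wordVal m) : l = m := by
  have hlt : ∀ l : List (Fin n × Bool), ∀ d ∈ l.map (fun a => 2 * (a.1 : ℕ) + a.2.toNat),
      d < 2 * n + 2 := by
    intro l d hd
    obtain ⟨a, -, rfl⟩ := List.mem_map.1 hd
    have := a.1.2
    have := a.2.toNat_le
    omega
  have hinj : Function.Injective fun a : Fin n × Bool => 2 * (a.1 : ℕ) + a.2.toNat := by
    rintro ⟨i, b⟩ ⟨j, c⟩ h
    cases b <;> cases c <;> simp at h <;> simp [Fin.ext_iff] <;> omega
  exact List.map_injective_iff.2 hinj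
    (Nat.ofDigits_inj_of_len_eq (by omega) (by simpa using hlen) (hlt l) (hlt m) h)

/-- The first half of the reduced word of `x`. -/
def half (x : FreeGroup (Fin n)) : List (Fin n × Bool) := x.toWord.take ((x.norm + 1) / 2)

/-- The total encoding of the two halves of the reduced word of `x`. -/
def halfVal (x : FreeGroup (Fin n)) : ℕ := wordVal (half x) + wordVal (half x⁻¹)

lemma halfVal_inv (x : FreeGroup (Fin n)) : halfVal x⁻¹ = halfVal x := by
  simp [halfVal, add_comm]

lemma toWord_mk_of_norm_eq {α : Type*} [DecidableEq α] {L : List (α × Bool)}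
    (h : (mk L).norm = L.length) :
    (mk L).toWord = L := by
  rw [toWord_mk]
  exact (reduce.red (L := L)).sublist.eq_of_length (by simpa [FreeGroup.norm] using h)

lemma wordVal_take_le {x y : FreeGroup (Fin n)} {k : ℕ} (hk : gromov x⁻¹ y = k)
    (hy : y.norm = 2 * k) (hx : 2 * k ≤ x.norm) (hV : halfVal x ≤ halfVal (x * y)) :
    wordVal (y.toWord.take k) ≤ wordVal (y⁻¹.toWord.take k) := by
  have hxlen : x⁻¹.toWord.length = x.norm := norm_inv_eq
  have hylen : y.toWord.length = 2 * k := hy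
  have hylen' : y⁻¹.toWord.length = 2 * k := by rw [← hy]; exact norm_inv_eq
  set p := y.toWord.take k with hp
  set q := y⁻¹.toWord.take k with hq
  set r := x⁻¹.toWord.drop k with hr
  have hplen : p.length = k := by simp [hp]; omega
  have hqlen : q.length = k := by simp [hq]; omega
  have hrlen : r.length = x.norm - k := by rw [hr, List.length_drop, hxlen]
  have hxw : x⁻¹.toWord = p ++ r := by
    rw [hp, hr, ← take_eq_take_of_le_lcp hk.ge, List.take_append_drop]
  have hyw : y.toWord = p ++ invRev q := by
    rw [hp, hq, toWord_inv, invRev_take_invRev (by omega), hylen,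
      show 2 * k - k = k by omega, List.take_append_drop]
  have hnorm : (x * y).norm = x.norm := by
    have := norm_mul x y
    omega
  have hxy : (x * y)⁻¹ = mk (q ++ r) := by
    rw [_root_.mul_inv_rev, ← mk_toWord (x := x⁻¹), hxw, ← mk_toWord (x := y), hyw, ← mul_mk, ← mul_mk,
      ← mul_mk, ← inv_mk]
    group
  have hxyw : (x * y)⁻¹.toWord = q ++ r := by
    rw [hxy, toWord_mk_of_norm_eq]
    rw [← hxy, norm_inv_eq, hnorm, List.length_append, hqlen, hrlen]
    omega
  have hx1 : x.toWord = invRev r ++ invRev p := by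
    rw [← invRev_append, ← hxw, ← toWord_inv, inv_inv]
  have hxy1 : (x * y).toWord = invRev r ++ invRev q := by
    rw [← invRev_append, ← hxyw, ← toWord_inv, inv_inv]
  have e1 : half (x * y) = half x := by
    rw [half, half, hnorm, hx1, hxy1, List.take_append_of_le_length,
      List.take_append_of_le_length] <;> rw [invRev_length, hrlen] <;> omega
  have e2 : half x⁻¹ = p ++ r.take ((x.norm + 1) / 2 - k) := by
    rw [half, hxw, norm_inv_eq, List.take_append, hplen, List.take_of_length_le (by omega)]
  have e3 : half (x * y)⁻¹ = q ++ r.take ((x.norm + 1) / 2 - k) := by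
    rw [half, hxyw, norm_inv_eq, hnorm, List.take_append, hqlen, List.take_of_length_le (by omega)]
  rw [halfVal, halfVal, e1, e2, e3, wordVal_append, wordVal_append, hplen, hqlen] at hV
  omega

/-- The inverse letter. -/
def flipLetter (a : Fin n × Bool) : Fin n × Bool := (a.1, !a.2)

lemma mk_flip (a : Fin n × Bool) : mk [flipLetter a] = (mk [a])⁻¹ := by
  simp [inv_mk, invRev, flipLetter]

/-- An automorphism whose length and half-value do not decrease under elementary Nielsen moves. -/
def NielsenReduced (g : FrAut n) : Prop := ∀ a b : Fin n × Bool, a.1 ≠ b.1 →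
  (g (mk [a])).norm ≤ (g (mk [a]) * g (mk [b])).norm ∧
    ((g (mk [a])).norm = (g (mk [a]) * g (mk [b])).norm →
      halfVal (g (mk [a])) ≤ halfVal (g (mk [a]) * g (mk [b])))

/-- The amount of cancellation between the images of two letters. -/
def cancel (g : FrAut n) (a b : Fin n × Bool) : ℕ := gromov (g (mk [a]))⁻¹ (g (mk [b]))

lemma cancel_flip (g : FrAut n) (a b : Fin n × Bool) :
    cancel g (flipLetter b) (flipLetter a) = cancel g a b := by
  simp only [cancel, mk_flip, _root_.map_inv, inv_inv]
  exact gromov_comm _ _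

lemma norm_flip (g : FrAut n) (a : Fin n × Bool) :
    (g (mk [flipLetter a])).norm = (g (mk [a])).norm := by
  rw [mk_flip, _root_.map_inv, norm_inv_eq]

lemma apply_mk_ne_one (g : FrAut n) (a : Fin n × Bool) : g (mk [a]) ≠ 1 := by
  simp [← toWord_eq_nil_iff]

lemma norm_apply_pos (g : FrAut n) (a : Fin n × Bool) : 0 < (g (mk [a])).norm :=
  Nat.pos_of_ne_zero fun h => apply_mk_ne_one g a (norm_eq_zero.1 h)

namespace NielsenReduced

variable {g : FrAut n} (hg : NielsenReduced g) {a b c : Fin n × Bool}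
include hg

lemma two_mul_cancel_le (hab : a.1 = b.1 → a.2 = b.2) :
    2 * cancel g a b ≤ (g (mk [b])).norm := by
  by_cases h : a.1 = b.1
  · obtain rfl : a = b := Prod.ext h (hab h)
    exact (two_mul_gromov_inv_self_lt (apply_mk_ne_one g a)).le
  · have h1 := (hg a b h).1
    have h2 := norm_mul (g (mk [a])) (g (mk [b]))
    unfold cancel
    omega

lemma two_mul_cancel_le_left (hab : a.1 = b.1 → a.2 = b.2) :
    2 * cancel g a b ≤ (g (mk [a])).norm := by
  rw [← cancel_flip, ← norm_flip]
  exact hg.two_mul_cancel_le fun h => congrArg (!·) (hab h.symm).symm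

omit hg in
lemma ne_of_two_mul_cancel_eq (hab : a.1 = b.1 → a.2 = b.2)
    (h : 2 * cancel g a b = (g (mk [b])).norm) : a.1 ≠ b.1 := by
  intro h'
  obtain rfl : a = b := Prod.ext h' (hab h')
  exact (two_mul_gromov_inv_self_lt (apply_mk_ne_one g a)).ne h

lemma wordVal_le {k : ℕ} (hab : a.1 = b.1 → a.2 = b.2) (hk : cancel g a b = k)
    (h : (g (mk [b])).norm = 2 * k) :
    wordVal ((g (mk [b])).toWord.take k) ≤ wordVal ((g (mk [b]))⁻¹.toWord.take k) := by
  have hne := ne_of_two_mul_cancel_eq (g := g) hab (by omega)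
  have h1 := hg.two_mul_cancel_le_left hab
  have h2 := norm_mul (g (mk [a])) (g (mk [b]))
  unfold cancel at hk h1
  exact wordVal_take_le hk h (by omega) ((hg a b hne).2 (by omega))

lemma cancel_add_cancel_lt (hab : a.1 = b.1 → a.2 = b.2) (hbc : b.1 = c.1 → b.2 = c.2) :
    cancel g a b + cancel g b c < (g (mk [b])).norm := by
  by_contra! h
  have h1 := hg.two_mul_cancel_le hab
  have h2 := hg.two_mul_cancel_le_left hbc
  obtain ⟨k, hk⟩ : ∃ k, cancel g a b = k := ⟨_, rfl⟩
  have hk' : cancel g (flipLetter c) (flipLetter b) = k := by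
    rw [cancel_flip]
    omega
  have hb : (g (mk [b])).norm = 2 * k := by omega
  have v1 := hg.wordVal_le hab hk hb
  have v2 := hg.wordVal_le (a := flipLetter c) (b := flipLetter b)
    (fun h => congrArg (!·) (hbc h.symm).symm) hk' (by rw [norm_flip, hb])
  rw [mk_flip, _root_.map_inv, inv_inv] at v2
  have hlen : (g (mk [b])).toWord.length = 2 * k := hb
  have hlen' : (g (mk [b]))⁻¹.toWord.length = 2 * k := by rw [← hb]; exact norm_inv_eq
  have heq := eq_of_wordVal_eq (by simp [hlen]) (le_antisymm v1 v2)
  have hdrop : (g (mk [b])).toWord.drop k = invRev ((g (mk [b])).toWord.take k) := by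
    rw [heq, toWord_inv, invRev_take_invRev (by omega), hlen]
    congr 1
    omega
  apply apply_mk_ne_one g b
  rw [← mk_toWord (x := g (mk [b])), ← List.take_append_drop k (g (mk [b])).toWord, hdrop,
    ← mul_mk, ← inv_mk, mul_inv_cancel]

lemma cancel_lt (hab : a.1 = b.1 → a.2 = b.2) : cancel g a b < (g (mk [b])).norm := by
  have := hg.two_mul_cancel_le hab
  have := norm_apply_pos g b
  omega

omit hg in
lemma apply_mk_cons (a : Fin n × Bool) (L : List (Fin n × Bool)) :
    g (mk (a :: L)) = g (mk [a]) * g (mk L) := by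
  rw [← _root_.map_mul, mul_mk, List.singleton_append]

lemma gromov_eq_cancel {L : List (Fin n × Bool)} (h : IsReduced (a :: b :: L)) :
    gromov (g (mk [a]))⁻¹ (g (mk (b :: L))) = cancel g a b := by
  induction L generalizing a b with
  | nil => rfl
  | cons c L ih =>
    obtain ⟨hab, hbc⟩ := isReduced_cons_cons.1 h
    have h1 := ih hbc
    have h2 := hg.cancel_add_cancel_lt hab (isReduced_cons_cons.1 hbc).1
    have h3 := norm_mul (g (mk [b])) (g (mk (c :: L)))
    have h4 := norm_inv_mul (g (mk [b])) (g (mk (b :: c :: L)))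
    rw [apply_mk_cons (L := c :: L), inv_mul_cancel_left] at h4
    rw [apply_mk_cons (L := c :: L)]
    have h5 := min_gromov_le (g (mk [a]))⁻¹ (g (mk [b])) (g (mk [b]) * g (mk (c :: L)))
    have h6 := min_gromov_le (g (mk [a]))⁻¹ (g (mk [b]) * g (mk (c :: L))) (g (mk [b]))
    rw [gromov_comm _ (g (mk [b]))] at h6
    unfold cancel at *
    omega

lemma length_add_cancel_le {L : List (Fin n × Bool)} (h : IsReduced (a :: b :: L)) :
    (b :: L).length + cancel g a b ≤ (g (mk (b :: L))).norm := by
  induction L generalizing a b with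
  | nil =>
    have := hg.cancel_lt (isReduced_cons_cons.1 h).1
    simp only [List.length_singleton]
    omega
  | cons c L ih =>
    obtain ⟨hab, hbc⟩ := isReduced_cons_cons.1 h
    have h1 := ih hbc
    have h2 := hg.cancel_add_cancel_lt hab (isReduced_cons_cons.1 hbc).1
    have h3 := norm_mul (g (mk [b])) (g (mk (c :: L)))
    rw [hg.gromov_eq_cancel hbc] at h3
    rw [apply_mk_cons (L := c :: L), List.length_cons]
    omega

lemma norm_le_norm_apply (u : FreeGroup (Fin n)) : u.norm ≤ (g u).norm := by
  have key : ∀ L : List (Fin n × Bool), IsReduced L → L.length ≤ (g (mk L)).norm := by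
    rintro (_ | ⟨a, L⟩) h
    · simp
    have h' : IsReduced (a :: a :: L) := isReduced_cons_cons.2 ⟨fun _ => rfl, h⟩
    have := hg.length_add_cancel_le h'
    omega
  have := key u.toWord isReduced_toWord
  rwa [mk_toWord] at this

end NielsenReduced

lemma leftT_mem {i j : Fin n} (hij : i ≠ j) (e : ℤˣ) : leftT i j e ∈ nielsenSubgroup n := by
  have h := signedPerm_mul_leftT hij 1 (ε := fun _ => -1) rfl e
  simp only [mul_neg, mul_one, neg_neg, one_mul, Equiv.Perm.one_apply] at h
  rw [eq_mul_inv_iff_mul_eq.2 h.symm]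
  exact mul_mem (mul_mem (signedPerm_mem _ _) (rightT_mem hij e)) (inv_mem (signedPerm_mem _ _))

/-- The total length of the images of the generators. -/
def totalNorm (g : FrAut n) : ℕ := ∑ i, (g (of i)).norm

/-- The total half-value of the images of the generators. -/
def totalVal (g : FrAut n) : ℕ := ∑ i, halfVal (g (of i))

/-- `g` is minimal among its neighbours for the lexicographic order on length and half-value. -/
def LocallyMinimal (g : FrAut n) : Prop := ∀ h ∈ nielsenSubgroup n,
  totalNorm g ≤ totalNorm (g * h) ∧
    (totalNorm g = totalNorm (g * h) → totalVal g ≤ totalVal (g * h))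

lemma exists_locallyMinimal (g : FrAut n) :
    ∃ h ∈ nielsenSubgroup n, LocallyMinimal (g * h) := by
  obtain ⟨_, ⟨h, hh, rfl⟩, hmin⟩ := WellFounded.has_min (wellFounded_lt (α := ℕ ×ₗ ℕ))
    ((fun h => toLex (totalNorm (g * h), totalVal (g * h))) '' (nielsenSubgroup n : Set (FrAut n)))
    ⟨_, 1, one_mem _, rfl⟩
  refine ⟨h, hh, fun h' hh' => ?_⟩
  have := hmin _ ⟨h * h', mul_mem hh hh', rfl⟩
  simp only [Prod.Lex.toLex_lt_toLex, ← mul_assoc] at this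
  omega

lemma sum_le_sum_of_agree {ι : Type*} [Fintype ι] [DecidableEq ι] {u v : ι → ℕ} {j : ι}
    (h : ∀ i, i ≠ j → u i = v i) : (∑ i, u i ≤ ∑ i, v i ↔ u j ≤ v j) ∧
      (∑ i, u i = ∑ i, v i ↔ u j = v j) := by
  have hsum : ∑ i ∈ Finset.univ.erase j, u i = ∑ i ∈ Finset.univ.erase j, v i :=
    Finset.sum_congr rfl fun i hi => h i (Finset.ne_of_mem_erase hi)
  rw [← Finset.add_sum_erase _ u (Finset.mem_univ j), ← Finset.add_sum_erase _ v
    (Finset.mem_univ j)]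
  omega

lemma LocallyMinimal.le {g : FrAut n} (hg : LocallyMinimal g) {h : FrAut n}
    (hh : h ∈ nielsenSubgroup n) {j : Fin n} (hfix : ∀ i, i ≠ j → h (of i) = of i) :
    (g (of j)).norm ≤ (g (h (of j))).norm ∧
      ((g (of j)).norm = (g (h (of j))).norm → halfVal (g (of j)) ≤ halfVal (g (h (of j)))) := by
  have h1 := hg h hh
  have h2 := sum_le_sum_of_agree (u := fun i => (g (of i)).norm)
    (v := fun i => ((g * h) (of i)).norm) (j := j) fun i hi => by simp [hfix i hi]
  have h3 := sum_le_sum_of_agree (u := fun i => halfVal (g (of i)))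
    (v := fun i => halfVal ((g * h) (of i))) (j := j) fun i hi => by simp [hfix i hi]
  rw [totalNorm, totalNorm, totalVal, totalVal, h2.1, h2.2, h3.1] at h1
  exact h1

lemma mk_singleton_eq_zpow (i : Fin n) (b : Bool) :
    mk [(i, b)] = of i ^ (((if b then 1 else -1 : ℤˣ)) : ℤ) := by
  cases b <;> simp [FreeGroup.of, inv_mk, invRev]

lemma LocallyMinimal.nielsenReduced {g : FrAut n} (hg : LocallyMinimal g) : NielsenReduced g := by
  rintro ⟨j, a⟩ ⟨i, b⟩ hij
  have hij' : i ≠ j := Ne.symm hij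
  cases a
  · have h := hg.le (leftT_mem hij' (-if b then 1 else -1)) fun k hk => leftT_of_ne hk _
    rw [leftT_of hij', Units.val_neg, _root_.zpow_neg, ← mk_singleton_eq_zpow] at h
    have e1 : mk [(j, false)] = (of j)⁻¹ := by simp [FreeGroup.of, inv_mk, invRev]
    have e2 : g (mk [(j, false)]) * g (mk [(i, b)]) = (g ((mk [(i, b)])⁻¹ * of j))⁻¹ := by
      rw [e1, ← _root_.map_mul, ← _root_.map_inv, _root_.mul_inv_rev, inv_inv]
    rw [e2, e1, _root_.map_inv, norm_inv_eq, norm_inv_eq, halfVal_inv, halfVal_inv]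
    exact h
  · have h := hg.le (rightT_mem hij' (if b then 1 else -1)) fun k hk => rightT_of_ne hk _
    rw [rightT_of hij', ← mk_singleton_eq_zpow, _root_.map_mul] at h
    exact h

lemma exists_signedPerm {g : FrAut n} (hg : ∀ i, (g (of i)).norm ≤ 1) :
    ∃ σ ε, g = signedPerm σ ε := by
  have hex : ∀ i, ∃ a : Fin n × Bool, g (of i) = mk [a] := by
    intro i
    have h0 : (g (of i)).toWord ≠ [] := by simp [toWord_eq_nil_iff]
    obtain ⟨a, ha⟩ := List.length_eq_one_iff.1 (le_antisymm (hg i) (List.length_pos_iff.2 h0))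
    exact ⟨a, by rw [← ha, mk_toWord]⟩
  choose a ha using hex
  have hinj : Function.Injective fun i => (a i).1 := by
    intro i j hij
    by_contra hne
    have h : mk [a i] = mk [a j] ∨ mk [a i] = (mk [a j])⁻¹ := by
      have hij : (a i).1 = (a j).1 := hij
      rcases hi : a i with ⟨x, b⟩
      rcases hj : a j with ⟨y, c⟩
      obtain rfl : x = y := by simpa [hi, hj] using hij
      cases b <;> cases c <;> simp [inv_mk, invRev]
    rw [← ha, ← ha, ← _root_.map_inv, g.injective.eq_iff, g.injective.eq_iff] at h
    rcases h with h | h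
    · exact hne (of_injective h)
    · have := congrArg toWord h
      simp [toWord_inv, invRev] at this
  refine ⟨Equiv.ofBijective _ (Finite.injective_iff_bijective.1 hinj),
    fun i => if (a i).2 then 1 else -1, frAut_ext fun i => ?_⟩
  rw [signedPerm_of, ha, Equiv.ofBijective_apply, ← mk_singleton_eq_zpow]

/-- **Nielsen's theorem**: right transvections and signed permutations generate `Aut(F_n)`. -/
theorem nielsenSubgroup_eq_top (n : ℕ) : nielsenSubgroup n = ⊤ := by
  refine eq_top_iff.2 fun g _ => ?_
  obtain ⟨h, hh, hmin⟩ := exists_locallyMinimal g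
  obtain ⟨σ, ε, hσ⟩ := exists_signedPerm (g := (g * h)⁻¹) fun i => by
    simpa [norm_of] using hmin.nielsenReduced.norm_le_norm_apply ((g * h)⁻¹ (of i))
  have h1 : g * h ∈ nielsenSubgroup n := by
    rw [← inv_mem_iff, hσ]
    exact signedPerm_mem σ ε
  simpa using mul_mem h1 (inv_mem hh)

end Nielsen
/-- For `n ≥ 3`, if `f ∈ Aut(F_n)` inverts every generator, then `IA_n ⊆ N(f)` and
`N(f) = ρ⁻¹({I, -I})`. -/
theorem normalClosure_of_total_inversion (n : ℕ) (hn : 3 ≤ n) (f : FrAut n)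
    (hf : ∀ i : Fin n, f (FreeGroup.of i) = (FreeGroup.of i)⁻¹) :
    IA n ≤ Subgroup.normalClosure {f} ∧
    ∀ g : FrAut n, g ∈ Subgroup.normalClosure {f} ↔ (ρ n g = 1 ∨ ρ n g = -1) := by
  have hIA := IA_le_normalClosure hf (nielsenSubgroup_eq_top n)
  exact ⟨hIA, mem_normalClosure_iff hf hIA⟩

end NormalClosurePaper
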